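/- arXiv:2505.05425 — 2 statements merged into one kernel-verified Lean document; each statement's English description precedes it below -/
import Mathlib

section
/- Fix d ∈ ℕ, ε ∈ (0,1/2], m ∈ ℕ, and a rectangle U ⊆ T^ω. Then U can be covered, up to a set of measure zero, by a family {E_n : n ∈ ℕ} of pairwise disjoint sets E_n := ⋃_{Q ∈ 𝒮_n} Q for some (ε,d)-configurations 𝒮_n, such that |E_{n₁}| = |E_{n₂}| whenever ⌈n₁/2^m⌉ = ⌈n₂/2^m⌉. -/
open MeasureTheory Filter Metric Topology ENNReal

/-- The one-dimensional torus `𝕋 = ℝ/ℤ`. -/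
abbrev 𝕋 : Type := AddCircle (1 : ℝ)

/-- The infinite-dimensional torus `𝕋^ω`, the countable product of copies of `𝕋`. -/
abbrev Torus : Type := ℕ → 𝕋

/-- A metric on `𝕋^ω` compatible with the product topology. -/
noncomputable instance : MetricSpace Torus := PiCountable.metricSpace

/-- The normalized Haar measure on the infinite-dimensional torus. -/
noncomputable def μT : MeasureTheory.Measure Torus := MeasureTheory.Measure.addHaarMeasure ⊤

/-- An interval (arc) in the one-dimensional torus: the image under the canonical projection
`ℝ → 𝕋` of an interval (order-connected set) of `ℝ`. -/
def IsArc (I : Set 𝕋) : Prop :=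
  ∃ J : Set ℝ, J.OrdConnected ∧ I = ((↑) : ℝ → 𝕋) '' J

/-- An open interval (arc) in the one-dimensional torus: the full torus, or the image of an
open interval of `ℝ` under the canonical projection `ℝ → 𝕋`. -/
def IsOpenArc (I : Set 𝕋) : Prop :=
  I = Set.univ ∨ ∃ a b : ℝ, I = ((↑) : ℝ → 𝕋) '' Set.Ioo a b

/-- A rectangle in `𝕋^ω` with sides parallel to the coordinate axes: a product `∏ d, I d` where
each `I d` is an interval in `𝕋`, and `I d = 𝕋` for all but finitely many `d`. -/
def IsRectangle (S : Set Torus) : Prop :=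
  ∃ I : ℕ → Set 𝕋, (∀ d, IsArc (I d)) ∧ (∀ᶠ d in Filter.cofinite, I d = Set.univ) ∧
    S = Set.univ.pi I

/-- An open rectangle in `𝕋^ω` with sides parallel to the coordinate axes. -/
def IsOpenRectangle (S : Set Torus) : Prop :=
  ∃ I : ℕ → Set 𝕋, (∀ d, IsOpenArc (I d)) ∧ (∀ᶠ d in Filter.cofinite, I d = Set.univ) ∧
    S = Set.univ.pi I
/-- For `m ≥ 1`, the unique `k` with `k² + k < m ≤ (k+1)² + (k+1)`. -/
def kOf (m : ℕ) : ℕ :=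
  Nat.find (⟨m, by nlinarith⟩ : ∃ k : ℕ, m ≤ (k + 1) ^ 2 + (k + 1))

/-- The exponent pattern of the dyadic Rubio de Francia set `V_m`: `expo m i` is the dyadic
exponent of the side of `V_m` in coordinate `i` (so that the side is `(0, 2^{-expo m i})`),
with `expo m i = 0` encoding a free coordinate (full torus). Starting with `(0,1/2) × 𝕋^{1,ω}`
at `m = 1`, at each step either a new coordinate of side `1/2` is appended or the sides are
successively halved, so that at `m = k² + k` one has `V_m = (0, 2^{-k})^{k+1} × 𝕋^{k+1,ω}`. -/
def expo (m : ℕ) (i : ℕ) : ℕ :=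
  let k := kOf m
  let r := m - (k ^ 2 + k)
  if r ≤ k + 1 then (if i < r then k + 1 else if i ≤ k then k else 0)
  else (if i ≤ k then k + 1 else if i = k + 1 then r - (k + 1) else 0)

/-- The dyadic rectangle in `𝕋^ω` with exponent pattern `e`, dyadic translation indices `t`,
and an additional real shift `c i` (in units of the side length `2^{-e i}`) in each nonfree
coordinate: the product of the arcs `((t i + c i)/2^{e i}, (t i + 1 + c i)/2^{e i})` over the
nonfree coordinates (times full tori in the free coordinates). -/
noncomputable def shiftedCell (e : ℕ → ℕ) (t : ℕ → ℕ) (c : ℕ → ℝ) : Set Torus :=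
  Set.univ.pi fun i =>
    if e i = 0 then Set.univ
    else ((↑) : ℝ → 𝕋) ''
      Set.Ioo (((t i : ℝ) + c i) / 2 ^ e i) (((t i : ℝ) + 1 + c i) / 2 ^ e i)

/-- The dyadic rectangle with exponent pattern `e` and dyadic translation indices `t`. -/
noncomputable def dyadicCell (e : ℕ → ℕ) (t : ℕ → ℕ) : Set Torus :=
  shiftedCell e t fun _ => 0

/-- The dyadic Rubio de Francia basis `R₀`: all sets `t + V_m` for `m ≥ 1` and `t` in the
dyadic grid `H_m`. -/
def R0 : Set (Set Torus) :=
  {S | ∃ (m : ℕ) (t : ℕ → ℕ), 0 < m ∧ (∀ i, t i < 2 ^ expo m i) ∧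
        S = dyadicCell (expo m) t}

/-- `𝒮` is an `(ε, d)`-configuration around `Q₀`: here `Q₀ = t + V_m ∈ R₀` satisfies
`|Q₀| ≤ 2^{-(d-1)²-1}` (hence has at least `d` nonfree coordinates), and
`𝒮 = {Q₀, Q₁, …, Q_d}` where, for `1 ≤ i ≤ d`, the set `Q_i` is `Q₀` translated to the right
in its `i`-th coordinate by `(1-ε)` times the side length, so that `|Q_i ∩ Q₀| = ε |Q₀|`. -/
def IsConfig (ε : ℝ) (d : ℕ) (Q₀ : Set Torus) (𝒮 : Set (Set Torus)) : Prop :=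
  ∃ (m : ℕ) (t : ℕ → ℕ), 0 < m ∧ (∀ i, t i < 2 ^ expo m i) ∧
    Q₀ = dyadicCell (expo m) t ∧
    μT Q₀ ≤ 2⁻¹ ^ ((d - 1) ^ 2 + 1) ∧
    (∀ i < d, expo m i ≠ 0) ∧
    𝒮 = insert Q₀
      {Q | ∃ i < d, Q = shiftedCell (expo m) t fun j => if j = i then 1 - ε else 0}

/-! Raising the exponents of a dyadic cell by `m + 2` in its first `d` coordinates makes room in it
for `2 ^ m + 1` disjoint translates of one configuration, each occupying at least the proportion
`2 ^ (-(m + 2) d)` of the cell, whatever the scale of the cell. An open set is exhausted by its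
dyadic cells, so putting a block of `2 ^ m` such translates into every cell of a fine enough scale
covers a fixed proportion of it. The blocks have null boundary: removing their closures leaves an
open set, to which the same is applied again, and the measure of the rest decays geometrically. The
translate left out of each block keeps the rest nonempty, so that infinitely many blocks arise; they
are listed one after the other. -/

section GreedyExhaustion

theorem measure_iInter_eq_zero_of_le_mul {X : Type*} [MeasurableSpace X] {μ : Measure X} {θ : ℝ≥0∞}
    {W : ℕ → Set X} (hθ : θ < 1) (h₀ : μ (W 0) ≠ ∞)
    (hW : ∀ n, μ (W (n + 1)) ≤ θ * μ (W n)) : μ (⋂ n, W n) = 0 := by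
  have hpow : ∀ n, μ (W n) ≤ θ ^ n * μ (W 0) := by
    intro n
    induction n with
    | zero => simp
    | succ n ih => calc
        μ (W (n + 1)) ≤ θ * μ (W n) := hW n
        _ ≤ θ * (θ ^ n * μ (W 0)) := by gcongr
        _ = θ ^ (n + 1) * μ (W 0) := by ring
  have hlim : Tendsto (fun n => θ ^ n * μ (W 0)) atTop (𝓝 0) := by
    simpa only [zero_mul] using ENNReal.Tendsto.mul_const
      (ENNReal.tendsto_pow_atTop_nhds_zero_of_lt_one hθ) (Or.inr h₀)
  exact le_antisymm (ge_of_tendsto' hlim fun n =>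
    (measure_mono (Set.iInter_subset W n)).trans (hpow n)) zero_le

variable {X β : Type*} [TopologicalSpace X]

/-- What is left of `W` after removing the closures of the sets `F b`, `b ∈ T`; closures are
removed so that the remainder of an open set by a finite family is again open. -/
def remainder (F : β → Set X) (W : Set X) (T : Set β) : Set X :=
  W \ ⋃ b ∈ T, closure (F b)

theorem isOpen_remainder {F : β → Set X} {W : Set X} {T : Set β} (hW : IsOpen W)
    (hT : T.Finite) : IsOpen (remainder F W T) :=
  hW.sdiff (hT.isClosed_biUnion fun _ _ => isClosed_closure)

theorem disjoint_remainder {F : β → Set X} {W : Set X} {T : Set β} {b : β} (hb : b ∈ T) :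
    Disjoint (F b) (remainder F W T) :=
  Set.disjoint_sdiff_right.mono_left
    (subset_closure.trans (Set.subset_biUnion_of_mem (u := fun b => closure (F b)) hb))

section Sequence

variable {F : β → Set X} {W : ℕ → Set X} {T : ℕ → Set β}

theorem antitone_of_succ_eq_remainder (hsucc : ∀ n, W (n + 1) = remainder F (W n) (T n)) :
    Antitone W :=
  antitone_nat_of_succ_le fun n => (hsucc n).trans_subset Set.sdiff_subset

theorem sdiff_iInter_subset_iUnion_closure
    (hsucc : ∀ n, W (n + 1) = remainder F (W n) (T n)) :
    W 0 \ ⋂ n, W n ⊆ ⋃ p : Σ n, T n, closure (F p.2) := by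
  rintro x ⟨hx₀, hx⟩
  by_contra hcl
  refine hx (Set.mem_iInter.2 fun n => ?_)
  induction n with
  | zero => exact hx₀
  | succ n ih =>
    rw [hsucc]
    refine ⟨ih, fun hmem => hcl ?_⟩
    obtain ⟨b, hb, hxb⟩ := Set.mem_iUnion₂.1 hmem
    exact Set.mem_iUnion.2 ⟨⟨n, b, hb⟩, hxb⟩

end Sequence

variable [MeasurableSpace X]

/-- One step of a greedy exhaustion of `W`: `T` selects finitely many disjoint members of the
family `F` inside `W`, whose removal reduces the measure by the factor `θ` but does not use up
all of `W`. -/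
structure IsGreedyStep (μ : Measure X) (F : β → Set X) (θ : ℝ≥0∞) (W : Set X) (T : Set β) :
    Prop where
  finite : T.Finite
  nonempty : T.Nonempty
  subset : ∀ b ∈ T, F b ⊆ W
  pairwiseDisjoint : T.PairwiseDisjoint F
  remainder_nonempty : (remainder F W T).Nonempty
  measure_remainder_le : μ (remainder F W T) ≤ θ * μ W

variable {μ : Measure X} {F : β → Set X} {θ : ℝ≥0∞}

theorem exists_greedy_sequence
    (h : ∀ W, IsOpen W → W.Nonempty → ∃ T, IsGreedyStep μ F θ W T)
    {U : Set X} (hU : IsOpen U) (hU' : U.Nonempty) :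
    ∃ (W : ℕ → Set X) (T : ℕ → Set β), W 0 = U ∧ (∀ n, IsGreedyStep μ F θ (W n) (T n)) ∧
      ∀ n, W (n + 1) = remainder F (W n) (T n) := by
  choose T hT using fun W : {W : Set X // IsOpen W ∧ W.Nonempty} => h W W.2.1 W.2.2
  let next (W : {W : Set X // IsOpen W ∧ W.Nonempty}) : {W : Set X // IsOpen W ∧ W.Nonempty} :=
    ⟨remainder F W (T W), isOpen_remainder W.2.1 (hT W).finite, (hT W).remainder_nonempty⟩
  let W (n : ℕ) := next^[n] ⟨U, hU, hU'⟩
  exact ⟨fun n => W n, fun n => T (W n), rfl, fun n => hT (W n),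
    fun n => congrArg Subtype.val (Function.iterate_succ_apply' next n _)⟩

theorem pairwise_disjoint_greedy_sequence {W : ℕ → Set X} {T : ℕ → Set β}
    (hstep : ∀ n, IsGreedyStep μ F θ (W n) (T n))
    (hsucc : ∀ n, W (n + 1) = remainder F (W n) (T n)) :
    Pairwise (Function.onFun Disjoint fun p : Σ n, T n => F p.2) := by
  have hlt : ∀ p q : Σ n, T n, p.1 < q.1 → Disjoint (F p.2) (F q.2) := fun p q hpq => by
    refine (disjoint_remainder (W := W p.1) p.2.2).mono_right ?_
    rw [← hsucc]
    exact ((hstep q.1).subset _ q.2.2).trans (antitone_of_succ_eq_remainder hsucc hpq)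
  rintro ⟨n, b, hb⟩ ⟨n', b', hb'⟩ hne
  rcases lt_trichotomy n n' with h | rfl | h
  · exact hlt ⟨n, b, hb⟩ ⟨n', b', hb'⟩ h
  · exact (hstep n).pairwiseDisjoint hb hb' fun hbb => hne (by subst hbb; rfl)
  · exact (hlt ⟨n', b', hb'⟩ ⟨n, b, hb⟩ h).symm

theorem exists_seq_pairwise_disjoint_ae_cover [IsFiniteMeasure μ] (hθ : θ < 1)
    (hF : ∀ b, closure (F b) =ᵐ[μ] F b)
    (h : ∀ W, IsOpen W → W.Nonempty → ∃ T, IsGreedyStep μ F θ W T)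
    {U : Set X} (hU : IsOpen U) (hU' : U.Nonempty) :
    ∃ b : ℕ → β, (∀ n, F (b n) ⊆ U) ∧ Pairwise (Function.onFun Disjoint fun n => F (b n)) ∧
      μ (U \ ⋃ n, F (b n)) = 0 := by
  obtain ⟨W, T, rfl, hstep, hsucc⟩ := exists_greedy_sequence h hU hU'
  have : ∀ n, Countable (T n) := fun n => (hstep n).finite.countable
  have : Infinite (Σ n, T n) := by
    choose b hb using fun n => (hstep n).nonempty
    exact Infinite.of_injective (fun n => (⟨n, b n, hb n⟩ : Σ n, T n))
      fun _ _ h => congrArg Sigma.fst h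
  obtain ⟨e⟩ : Nonempty (ℕ ≃ Σ n, T n) := nonempty_equiv_of_countable
  have hnull : μ (⋂ n, W n) = 0 :=
    measure_iInter_eq_zero_of_le_mul hθ (measure_ne_top μ _) fun n =>
      (hsucc n).symm ▸ (hstep n).measure_remainder_le
  refine ⟨fun n => (e n).2, fun n => ((hstep _).subset _ (e n).2.2).trans
    (antitone_of_succ_eq_remainder hsucc (Nat.zero_le _)),
    (pairwise_disjoint_greedy_sequence hstep hsucc).comp_of_injective e.injective, ?_⟩
  rw [e.surjective.iUnion_comp fun p => F p.2]
  have hclosure : (⋃ p : Σ n, T n, closure (F p.2) : Set X) =ᵐ[μ] ⋃ p : Σ n, T n, F p.2 :=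
    Filter.EventuallyEq.countable_iUnion fun p => hF p.2
  refine measure_mono_null ?_ (measure_union_null hnull (ae_le_set.1 hclosure.le))
  intro x hx
  by_cases hxW : x ∈ ⋂ n, W n
  · exact Or.inl hxW
  · exact Or.inr ⟨sdiff_iInter_subset_iUnion_closure hsucc ⟨hx.1, hxW⟩, hx.2⟩

end GreedyExhaustion

section FillsCells

variable {X : Type*} [TopologicalSpace X] [MeasurableSpace X] {ι : ℕ → Type*}

/-- A sequence of partitions of `X` into shrinking cells `cell k ⁻¹' {u}`, together with, in each
cell, an open set `F k u` with null boundary that occupies at least the proportion `c` of the cell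
but leaves room for a further open set. -/
structure FillsCells (μ : Measure X) (cell : ∀ k, X → ι k) (F : ∀ k, ι k → Set X)
    (c : ℝ≥0∞) : Prop where
  measurableSet_cell : ∀ k u, MeasurableSet (cell k ⁻¹' {u})
  tendsto_cell : ∀ x, Tendsto (fun k => cell k ⁻¹' {cell k x}) atTop (𝓝 x).smallSets
  isOpen : ∀ k u, IsOpen (F k u)
  subset_cell : ∀ k u, F k u ⊆ cell k ⁻¹' {u}
  closure_ae_eq : ∀ k u, closure (F k u) =ᵐ[μ] F k u
  mul_measure_cell_le : ∀ k u, c * μ (cell k ⁻¹' {u}) ≤ μ (F k u)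
  interior_sdiff_nonempty : ∀ k u, (interior (cell k ⁻¹' {u} \ F k u)).Nonempty

variable {μ : Measure X} {cell : ∀ k, X → ι k} {F : ∀ k, ι k → Set X} {c : ℝ≥0∞}

namespace FillsCells

theorem disjoint_of_ne (h : FillsCells μ cell F c) {k : ℕ} {u v : ι k} (huv : u ≠ v) :
    Disjoint (F k u) (F k v) :=
  (Disjoint.preimage (cell k) (Set.disjoint_singleton.2 huv)).mono
    (h.subset_cell k u) (h.subset_cell k v)

theorem exists_half_measure_lt [IsFiniteMeasure μ] (h : FillsCells μ cell F c)
    {W : Set X} (hW : IsOpen W) (hμW : μ W ≠ 0) :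
    ∃ k, μ W / 2 < μ (⋃ u ∈ {u | cell k ⁻¹' {u} ⊆ W}, cell k ⁻¹' {u}) := by
  let B (N : ℕ) : Set X := {x | ∀ k ≥ N, cell k ⁻¹' {cell k x} ⊆ W}
  have hmono : Monotone B := fun N N' hN x hx k hk => hx k (hN.trans hk)
  have hiUnion : ⋃ N, B N = W := by
    refine Set.Subset.antisymm (Set.iUnion_subset fun N x hx => hx N le_rfl rfl) fun x hx => ?_
    exact Set.mem_iUnion.2 <| eventually_atTop.1 <|
      tendsto_smallSets_iff.1 (h.tendsto_cell x) W (hW.mem_nhds hx)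
  have hlim : Tendsto (μ ∘ B) atTop (𝓝 (μ W)) :=
    hiUnion ▸ tendsto_measure_iUnion_atTop hmono
  obtain ⟨N, hN⟩ := (hlim.eventually
    (lt_mem_nhds (ENNReal.half_lt_self hμW (measure_ne_top μ W)))).exists
  refine ⟨N, hN.trans_le (measure_mono fun x hx => ?_)⟩
  exact Set.mem_biUnion (hx N le_rfl) rfl

theorem mul_measure_biUnion_cell_le [OpensMeasurableSpace X] (h : FillsCells μ cell F c)
    {k : ℕ} {S : Set (ι k)} (hS : S.Countable) :
    c * μ (⋃ u ∈ S, cell k ⁻¹' {u}) ≤ μ (⋃ u ∈ S, F k u) := by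
  rw [measure_biUnion hS (fun u _ v _ huv => Disjoint.preimage _ (Set.disjoint_singleton.2 huv))
      fun u _ => h.measurableSet_cell k u,
    measure_biUnion hS (fun u _ v _ huv => h.disjoint_of_ne huv)
      fun u _ => (h.isOpen k u).measurableSet, ← ENNReal.tsum_mul_left]
  exact ENNReal.tsum_le_tsum fun u => h.mul_measure_cell_le k u

theorem remainder_nonempty (h : FillsCells μ cell F c) {k : ℕ} {S : Set (ι k)} {W : Set X}
    {v : ι k} (hvW : cell k ⁻¹' {v} ⊆ W) : (remainder (F k) W S).Nonempty := by
  obtain ⟨x, hx⟩ := h.interior_sdiff_nonempty k v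
  have hdisj : ∀ u, Disjoint (interior (cell k ⁻¹' {v} \ F k v)) (F k u) := by
    intro u
    rcases eq_or_ne u v with rfl | huv
    · exact Set.disjoint_sdiff_left.mono_left interior_subset
    · exact (Disjoint.preimage _ (Set.disjoint_singleton.2 huv.symm)).mono
        (interior_subset.trans Set.sdiff_subset) (h.subset_cell k u)
  refine ⟨x, hvW (interior_subset hx).1, fun hcl => ?_⟩
  obtain ⟨u, -, hxu⟩ := Set.mem_iUnion₂.1 hcl
  exact Set.disjoint_left.1 ((hdisj u).closure_right isOpen_interior) hx hxu

theorem measure_remainder_le [OpensMeasurableSpace X] [IsFiniteMeasure μ]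
    (h : FillsCells μ cell F c) {k : ℕ} {S : Set (ι k)} (hS : S.Countable) {W : Set X}
    (hSW : ∀ u ∈ S, cell k ⁻¹' {u} ⊆ W)
    (hhalf : μ W / 2 ≤ μ (⋃ u ∈ S, cell k ⁻¹' {u})) :
    μ (remainder (F k) W S) ≤ (1 - c / 2) * μ W := by
  have hFW : ⋃ u ∈ S, F k u ⊆ W :=
    Set.iUnion₂_subset fun u hu => (h.subset_cell k u).trans (hSW u hu)
  have hFopen : IsOpen (⋃ u ∈ S, F k u) := isOpen_biUnion fun u _ => h.isOpen k u
  have hFμ : c / 2 * μ W ≤ μ (⋃ u ∈ S, F k u) := calc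
    c / 2 * μ W = c * (μ W / 2) := by simp only [div_eq_mul_inv]; ring
    _ ≤ c * μ (⋃ u ∈ S, cell k ⁻¹' {u}) := by gcongr
    _ ≤ μ (⋃ u ∈ S, F k u) := h.mul_measure_biUnion_cell_le hS
  calc μ (remainder (F k) W S) ≤ μ (W \ ⋃ u ∈ S, F k u) :=
        measure_mono (Set.sdiff_subset_sdiff_right (Set.iUnion₂_mono fun _ _ => subset_closure))
    _ = μ W - μ (⋃ u ∈ S, F k u) := measure_sdiff hFW
        hFopen.measurableSet.nullMeasurableSet (measure_ne_top μ _)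
    _ ≤ μ W - c / 2 * μ W := tsub_le_tsub_left hFμ _
    _ = (1 - c / 2) * μ W := by
        rw [ENNReal.sub_mul fun _ _ => measure_ne_top μ W, one_mul]

variable [OpensMeasurableSpace X] [IsFiniteMeasure μ] [μ.IsOpenPosMeasure] [∀ k, Finite (ι k)]

theorem exists_isGreedyStep (h : FillsCells μ cell F c) {W : Set X} (hW : IsOpen W)
    (hW' : W.Nonempty) :
    ∃ T, IsGreedyStep μ (fun b : Σ k, ι k => F b.1 b.2) (1 - c / 2) W T := by
  obtain ⟨k, hk⟩ := h.exists_half_measure_lt hW (hW.measure_pos μ hW').ne'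
  let S : Set (ι k) := {u | cell k ⁻¹' {u} ⊆ W}
  have hrem : remainder (fun b : Σ k, ι k => F b.1 b.2) W (Sigma.mk k '' S) =
      remainder (F k) W S := by
    rw [remainder, Set.biUnion_image, remainder]
  obtain ⟨v, hv⟩ : S.Nonempty := by
    rw [Set.nonempty_iff_ne_empty]
    intro hS
    simp [show {u | cell k ⁻¹' {u} ⊆ W} = ∅ from hS] at hk
  refine ⟨Sigma.mk k '' S, S.toFinite.image _, ⟨_, v, hv, rfl⟩, ?_, ?_, ?_, ?_⟩
  · rintro _ ⟨u, hu, rfl⟩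
    exact (h.subset_cell k u).trans hu
  · rintro _ ⟨u, -, rfl⟩ _ ⟨w, -, rfl⟩ huw
    exact h.disjoint_of_ne fun huw' => huw (congrArg _ huw')
  · exact hrem ▸ h.remainder_nonempty hv
  · exact hrem ▸ h.measure_remainder_le S.to_countable (fun _ hu => hu) hk.le

theorem exists_seq_ae_cover (h : FillsCells μ cell F c) (hc : c ≠ 0) {U : Set X}
    (hU : IsOpen U) (hU' : U.Nonempty) :
    ∃ b : ℕ → Σ k, ι k, (∀ n, F (b n).1 (b n).2 ⊆ U) ∧
      Pairwise (Function.onFun Disjoint fun n => F (b n).1 (b n).2) ∧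
      μ (U \ ⋃ n, F (b n).1 (b n).2) = 0 :=
  exists_seq_pairwise_disjoint_ae_cover
    (ENNReal.sub_lt_self ENNReal.one_ne_top one_ne_zero (by simpa using hc))
    (fun b => h.closure_ae_eq b.1 b.2) (fun _ => h.exists_isGreedyStep) hU hU'

end FillsCells

end FillsCells

section Circle

instance : IsProbabilityMeasure (volume : Measure 𝕋) := ⟨UnitAddCircle.measure_univ⟩

instance : NullSingletonClass (volume : Measure 𝕋) :=
  ⟨fun y => by simpa using AddCircle.volume_closedBall (T := 1) (x := y) 0⟩

/-- The representative in `[0, 1)` of a point of the circle. -/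
noncomputable def circleRep (y : 𝕋) : ℝ := AddCircle.equivIco 1 0 y

theorem circleRep_mem (y : 𝕋) : circleRep y ∈ Set.Ico (0 : ℝ) 1 := by
  simpa [circleRep] using (AddCircle.equivIco (1 : ℝ) 0 y).2

theorem coe_circleRep (y : 𝕋) : (circleRep y : 𝕋) = y :=
  AddCircle.coe_equivIco

theorem circleRep_coe {a : ℝ} (ha : a ∈ Set.Ico (0 : ℝ) 1) : circleRep (a : 𝕋) = a :=
  AddCircle.equivIco_coe_of_mem (by simpa using ha)

theorem measurable_circleRep : Measurable circleRep :=
  measurable_subtype_coe.comp (AddCircle.measurableEquivIco (1 : ℝ) 0).measurable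

theorem isOpen_image_coe_Ioo (a b : ℝ) : IsOpen (((↑) : ℝ → 𝕋) '' Set.Ioo a b) :=
  QuotientAddGroup.isOpenMap_coe _ isOpen_Ioo

theorem volume_image_coe_Ioo {a b : ℝ} (h : b ≤ a + 1) :
    volume (((↑) : ℝ → 𝕋) '' Set.Ioo a b) = ENNReal.ofReal (b - a) := by
  have hpre : ((↑) : ℝ → 𝕋) ⁻¹' (((↑) : ℝ → 𝕋) '' Set.Ioo a b) ∩ Set.Ioc a (a + 1) =
      Set.Ioo a b := by
    refine Set.Subset.antisymm ?_ fun x hx => ⟨⟨x, hx, rfl⟩, hx.1, hx.2.le.trans h⟩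
    rintro x ⟨⟨y, hy, hyx⟩, hx⟩
    rwa [← (AddCircle.coe_eq_coe_iff_of_mem_Ioc ⟨hy.1, hy.2.le.trans h⟩ hx).1 hyx]
  rw [AddCircle.add_projection_respects_measure 1 a (isOpen_image_coe_Ioo a b).measurableSet,
    ← Real.volume_Ioo]
  exact congrArg volume hpre

theorem closure_image_coe_Ioo_ae_eq (a b : ℝ) :
    closure (((↑) : ℝ → 𝕋) '' Set.Ioo a b) =ᵐ[volume] ((↑) : ℝ → 𝕋) '' Set.Ioo a b := by
  refine EventuallyLE.antisymm (ae_le_set.2 ?_) subset_closure.eventuallyLE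
  have hcl : closure (((↑) : ℝ → 𝕋) '' Set.Ioo a b) ⊆ ((↑) : ℝ → 𝕋) '' Set.Icc a b :=
    closure_minimal (Set.image_mono Set.Ioo_subset_Icc_self)
      (isCompact_Icc.image (AddCircle.continuous_mk' 1)).isClosed
  refine measure_mono_null (t := ((↑) : ℝ → 𝕋) '' {a, b}) ?_
    (((Set.toFinite {a, b}).image _).countable.measure_zero _)
  rintro y ⟨hy, hy'⟩
  obtain ⟨x, hx, rfl⟩ := hcl hy
  refine Set.mem_image_of_mem _ ?_
  rw [← Set.Icc_sdiff_Ioo_same (hx.1.trans hx.2)]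
  exact ⟨hx, fun hx' => hy' ⟨x, hx', rfl⟩⟩

end Circle

section DyadicArc

/-- The factor of `shiftedCell` in one coordinate. -/
def dyadicArc (e t : ℕ) (c : ℝ) : Set 𝕋 :=
  if e = 0 then Set.univ
  else ((↑) : ℝ → 𝕋) '' Set.Ioo (((t : ℝ) + c) / 2 ^ e) (((t : ℝ) + 1 + c) / 2 ^ e)

variable {e t : ℕ} {c : ℝ} {y : 𝕋}

theorem dyadicArc_zero (t : ℕ) (c : ℝ) : dyadicArc 0 t c = Set.univ :=
  if_pos rfl

theorem dyadicArc_of_ne_zero (he : e ≠ 0) (t : ℕ) (c : ℝ) : dyadicArc e t c =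
    ((↑) : ℝ → 𝕋) '' Set.Ioo (((t : ℝ) + c) / 2 ^ e) (((t : ℝ) + 1 + c) / 2 ^ e) :=
  if_neg he

theorem isOpen_dyadicArc (e t : ℕ) (c : ℝ) : IsOpen (dyadicArc e t c) := by
  rcases eq_or_ne e 0 with rfl | he
  · exact dyadicArc_zero t c ▸ isOpen_univ
  · exact dyadicArc_of_ne_zero he t c ▸ isOpen_image_coe_Ioo _ _

theorem closure_dyadicArc_ae_eq (e t : ℕ) (c : ℝ) :
    closure (dyadicArc e t c) =ᵐ[volume] dyadicArc e t c := by
  rcases eq_or_ne e 0 with rfl | he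
  · rw [dyadicArc_zero, closure_univ]; rfl
  · exact dyadicArc_of_ne_zero he t c ▸ closure_image_coe_Ioo_ae_eq _ _

theorem volume_dyadicArc (e t : ℕ) (c : ℝ) : volume (dyadicArc e t c) = 2⁻¹ ^ e := by
  rcases eq_or_ne e 0 with rfl | he
  · rw [dyadicArc_zero, measure_univ, pow_zero]
  · have hlen : ((t : ℝ) + 1 + c) / 2 ^ e = (t + c) / 2 ^ e + (2 ^ e)⁻¹ := by ring
    have hle : ((2 : ℝ) ^ e)⁻¹ ≤ 1 := inv_le_one_of_one_le₀ (one_le_pow₀ one_le_two)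
    rw [dyadicArc_of_ne_zero he, volume_image_coe_Ioo (by linarith), hlen, add_sub_cancel_left,
      ENNReal.ofReal_inv_of_pos (by positivity), ENNReal.ofReal_pow zero_le_two,
      ENNReal.ofReal_ofNat, ENNReal.inv_pow]

theorem coe_add_mem_dyadicArc_iff :
    ((t / 2 ^ e : ℝ) : 𝕋) + y ∈ dyadicArc e t c ↔ y ∈ dyadicArc e 0 c := by
  rcases eq_or_ne e 0 with rfl | he
  · simp only [dyadicArc_zero, Set.mem_univ]
  · rw [dyadicArc_of_ne_zero he, dyadicArc_of_ne_zero he,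
      show ((t : ℝ) + c) / 2 ^ e = t / 2 ^ e + ((0 : ℕ) + c) / 2 ^ e by push_cast; ring,
      show ((t : ℝ) + 1 + c) / 2 ^ e = t / 2 ^ e + ((0 : ℕ) + 1 + c) / 2 ^ e by push_cast; ring,
      ← Set.image_const_add_Ioo, Set.image_image]
    simp only [AddCircle.coe_add]
    exact exists_congr fun x => and_congr_right fun _ => add_right_inj _

/-- The position of a point of the circle in the dyadic grid of step `2 ^ (-e)`. -/
noncomputable def dyadicFloor (e : ℕ) (y : 𝕋) : ℕ := ⌊circleRep y * 2 ^ e⌋₊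

theorem circleRep_mul_nonneg (e : ℕ) (y : 𝕋) : 0 ≤ circleRep y * 2 ^ e :=
  mul_nonneg (circleRep_mem y).1 (by positivity)

theorem dyadicFloor_eq_iff :
    dyadicFloor e y = t ↔ (t : ℝ) ≤ circleRep y * 2 ^ e ∧ circleRep y * 2 ^ e < t + 1 :=
  Nat.floor_eq_iff (circleRep_mul_nonneg e y)

theorem dyadicFloor_lt (e : ℕ) (y : 𝕋) : dyadicFloor e y < 2 ^ e := by
  rw [dyadicFloor, Nat.floor_lt (circleRep_mul_nonneg e y), Nat.cast_pow, Nat.cast_ofNat]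
  exact mul_lt_of_lt_one_left (by positivity) (circleRep_mem y).2

theorem measurable_dyadicFloor (e : ℕ) : Measurable (dyadicFloor e) :=
  Nat.measurable_floor.comp (measurable_circleRep.mul_const _)

theorem dyadicFloor_add_div (e s : ℕ) (y : 𝕋) :
    dyadicFloor (e + s) y / 2 ^ s = dyadicFloor e y := by
  rw [dyadicFloor, dyadicFloor, ← Nat.floor_div_natCast, pow_add, ← mul_assoc, Nat.cast_pow,
    Nat.cast_ofNat, mul_div_cancel_right₀ _ (by positivity)]

theorem dyadicFloor_bounds_of_mem_dyadicArc (hc : 0 ≤ c) (ht : t + 1 + c ≤ 2 ^ e)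
    (hy : y ∈ dyadicArc e t c) :
    t ≤ dyadicFloor e y ∧ (dyadicFloor e y : ℝ) < t + 1 + c := by
  rcases eq_or_ne e 0 with rfl | he
  · have hfloor : dyadicFloor 0 y = 0 := Nat.lt_one_iff.1 (dyadicFloor_lt 0 y)
    have ht₀ : (t : ℝ) ≤ 0 := by linarith [pow_zero (2 : ℝ)]
    rw [hfloor, Nat.cast_zero]
    exact ⟨by exact_mod_cast ht₀, by positivity⟩
  · have hpow : (0 : ℝ) < 2 ^ e := by positivity
    rw [dyadicArc_of_ne_zero he] at hy
    obtain ⟨x, ⟨hx, hx'⟩, rfl⟩ := hy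
    have hx₀ : 0 ≤ x := (div_nonneg (by positivity) hpow.le).trans hx.le
    have hx₁ : x < 1 := hx'.trans_le ((div_le_one hpow).2 ht)
    rw [dyadicFloor, circleRep_coe ⟨hx₀, hx₁⟩]
    rw [div_lt_iff₀ hpow] at hx
    rw [lt_div_iff₀ hpow] at hx'
    exact ⟨Nat.le_floor (by linarith), (Nat.floor_le (by positivity)).trans_lt hx'⟩

theorem preimage_dyadicFloor_subset_closure (e t : ℕ) :
    dyadicFloor e ⁻¹' {t} ⊆ closure (dyadicArc e t 0) := by
  rcases eq_or_ne e 0 with rfl | he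
  · rw [dyadicArc_zero, closure_univ]
    exact Set.subset_univ _
  · intro y hy
    have hpow : (0 : ℝ) < 2 ^ e := by positivity
    obtain ⟨h, h'⟩ := dyadicFloor_eq_iff.1 hy
    rw [dyadicArc_of_ne_zero he, add_zero, add_zero, ← coe_circleRep y]
    refine image_closure_subset_closure_image (AddCircle.continuous_mk' 1)
      (Set.mem_image_of_mem _ ?_)
    rw [closure_Ioo (div_lt_div_of_pos_right (lt_add_one _) hpow).ne]
    exact ⟨(div_le_iff₀ hpow).2 h, ((lt_div_iff₀ hpow).2 h').le⟩

theorem dist_le_of_dyadicFloor_eq {x : 𝕋} (h : dyadicFloor e x = dyadicFloor e y) :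
    dist x y ≤ 2⁻¹ ^ e := by
  have hx := dyadicFloor_eq_iff.1 h
  have hy := dyadicFloor_eq_iff.1 (rfl : dyadicFloor e y = _)
  have hmul : |circleRep x - circleRep y| * 2 ^ e ≤ 1 := by
    rw [← abs_of_pos (by positivity : (0 : ℝ) < 2 ^ e), ← abs_mul, sub_mul, abs_le]
    exact ⟨by linarith [hx.1, hy.2], by linarith [hx.2, hy.1]⟩
  calc dist x y = ‖((circleRep x - circleRep y : ℝ) : 𝕋)‖ := by
        rw [AddCircle.coe_sub, coe_circleRep, coe_circleRep, dist_eq_norm]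
    _ ≤ |circleRep x - circleRep y| := QuotientAddGroup.norm_mk_le_norm
    _ ≤ 1 / 2 ^ e := (le_div_iff₀ (by positivity)).2 hmul
    _ = 2⁻¹ ^ e := by rw [one_div, inv_pow]

theorem tendsto_preimage_dyadicFloor (y : 𝕋) :
    Tendsto (fun e => dyadicFloor e ⁻¹' {dyadicFloor e y}) atTop (𝓝 y).smallSets := by
  refine tendsto_smallSets_iff.2 fun s hs => ?_
  obtain ⟨δ, hδ, hball⟩ := Metric.mem_nhds_iff.1 hs
  have hlim : Tendsto (fun e => (2⁻¹ : ℝ) ^ e) atTop (𝓝 0) :=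
    _root_.tendsto_pow_atTop_nhds_zero_of_lt_one (by norm_num) (by norm_num)
  filter_upwards [hlim.eventually_lt_const hδ] with e he x hx
  exact hball ((dist_le_of_dyadicFloor_eq hx).trans_lt he)

end DyadicArc

section TorusMeasure

instance : μT.IsAddHaarMeasure := by unfold μT; infer_instance

instance : IsProbabilityMeasure μT :=
  ⟨Measure.addHaarMeasure_self (K₀ := (⊤ : TopologicalSpace.PositiveCompacts Torus))⟩

theorem μT_eq_infinitePi : μT = Measure.infinitePi fun _ : ℕ => (volume : Measure 𝕋) := by
  let ν := Measure.infinitePi fun _ : ℕ => (volume : Measure 𝕋)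
  have : ν.IsAddLeftInvariant := ⟨fun g => by
    have hmap := Measure.infinitePi_map_pi (fun _ : ℕ => (volume : Measure 𝕋))
      (f := fun i y => g i + y) fun i => measurable_const_add (g i)
    simp only [map_add_left_eq_self] at hmap
    exact hmap⟩
  have : ν.IsAddHaarMeasure :=
    Measure.isAddHaarMeasure_of_isCompact_nonempty_interior ν Set.univ isCompact_univ
      (by simp) (by simp) (by simp)
  exact Measure.isAddHaarMeasure_eq_of_isProbabilityMeasure μT ν

theorem quasiMeasurePreserving_eval (i : ℕ) :
    Measure.QuasiMeasurePreserving (Function.eval i) μT (volume : Measure 𝕋) := by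
  rw [μT_eq_infinitePi]
  exact (measurePreserving_eval_infinitePi (fun _ : ℕ => (volume : Measure 𝕋))
    i).quasiMeasurePreserving

theorem closure_univ_pi_ae_eq {A : ℕ → Set 𝕋} (hA : ∀ i, closure (A i) =ᵐ[volume] A i) :
    closure (Set.univ.pi A) =ᵐ[μT] Set.univ.pi A := by
  rw [closure_pi_set, Set.univ_pi_eq_iInter, Set.univ_pi_eq_iInter]
  exact Filter.EventuallyEq.countable_iInter fun i =>
    (quasiMeasurePreserving_eval i).preimage_ae_eq (hA i)

end TorusMeasure

section ShiftedCell

variable {e : ℕ → ℕ} {n : ℕ}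

theorem shiftedCell_eq_pi_range (he : ∀ i ≥ n, e i = 0) (t : ℕ → ℕ) (c : ℕ → ℝ) :
    shiftedCell e t c = (Finset.range n : Set ℕ).pi fun i => dyadicArc (e i) (t i) (c i) := by
  refine Set.Subset.antisymm (Set.pi_mono' (fun _ _ => subset_rfl) (Set.subset_univ _)) ?_
  intro x hx i _
  rcases lt_or_ge i n with hi | hi
  · exact hx i (Finset.mem_coe.2 (Finset.mem_range.2 hi))
  · change x i ∈ dyadicArc (e i) (t i) (c i)
    rw [he i hi, dyadicArc_zero]
    exact Set.mem_univ (x i)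

theorem isOpen_shiftedCell (he : ∀ i ≥ n, e i = 0) (t : ℕ → ℕ) (c : ℕ → ℝ) :
    IsOpen (shiftedCell e t c) := by
  rw [shiftedCell_eq_pi_range he]
  exact isOpen_set_pi (Finset.finite_toSet _) fun i _ => isOpen_dyadicArc _ _ _

theorem closure_shiftedCell_ae_eq (e t : ℕ → ℕ) (c : ℕ → ℝ) :
    closure (shiftedCell e t c) =ᵐ[μT] shiftedCell e t c :=
  closure_univ_pi_ae_eq fun i => closure_dyadicArc_ae_eq (e i) (t i) (c i)

theorem μT_shiftedCell (he : ∀ i ≥ n, e i = 0) (t : ℕ → ℕ) (c : ℕ → ℝ) :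
    μT (shiftedCell e t c) = 2⁻¹ ^ ∑ i ∈ Finset.range n, e i := by
  rw [shiftedCell_eq_pi_range he, μT_eq_infinitePi,
    Measure.infinitePi_pi _ fun i _ => (isOpen_dyadicArc _ _ _).measurableSet,
    ← Finset.prod_pow_eq_pow_sum]
  exact Finset.prod_congr rfl fun i _ => volume_dyadicArc _ _ _

theorem preimage_add_shiftedCell (e t : ℕ → ℕ) (c : ℕ → ℝ) :
    (fun x : Torus => (fun i => ((t i / 2 ^ e i : ℝ) : 𝕋)) + x) ⁻¹' shiftedCell e t c =
      shiftedCell e 0 c :=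
  Set.ext fun _ => forall₂_congr fun _ _ => coe_add_mem_dyadicArc_iff

end ShiftedCell

section DyadicIndex

/-- Positions in the dyadic grid of the torus with step `2 ^ (-e i)` in coordinate `i`. -/
abbrev DyadicIndex (e : ℕ → ℕ) : Type := ∀ i, Fin (2 ^ e i)

/-- The position of a point of the torus in the dyadic grid with exponents `e`. -/
noncomputable def dyadicIndex (e : ℕ → ℕ) (x : Torus) : DyadicIndex e :=
  fun i => ⟨dyadicFloor (e i) (x i), dyadicFloor_lt (e i) (x i)⟩

variable {e : ℕ → ℕ}

theorem finite_dyadicIndex {n : ℕ} (he : ∀ i ≥ n, e i = 0) : Finite (DyadicIndex e) := by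
  refine Finite.of_injective (fun (u : DyadicIndex e) (i : Fin n) => u i) fun u v huv => ?_
  funext i
  rcases lt_or_ge i n with hi | hi
  · exact congrFun huv ⟨i, hi⟩
  · have : Subsingleton (Fin (2 ^ e i)) := by rw [he i hi, pow_zero]; infer_instance
    exact Subsingleton.elim _ _

theorem preimage_dyadicIndex (u : DyadicIndex e) :
    dyadicIndex e ⁻¹' {u} = Set.univ.pi fun i => dyadicFloor (e i) ⁻¹' {(u i : ℕ)} := by
  ext x
  simp only [Set.mem_preimage, Set.mem_singleton_iff, funext_iff, Fin.ext_iff, dyadicIndex,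
    Set.mem_univ_pi]

theorem measurableSet_preimage_dyadicIndex (u : DyadicIndex e) :
    MeasurableSet (dyadicIndex e ⁻¹' {u}) := by
  rw [preimage_dyadicIndex]
  exact MeasurableSet.univ_pi fun i => measurable_dyadicFloor _ (measurableSet_singleton _)

theorem μT_preimage_dyadicIndex_le (u : DyadicIndex e) :
    μT (dyadicIndex e ⁻¹' {u}) ≤ μT (dyadicCell e fun i => u i) := by
  rw [dyadicCell, ← measure_congr (closure_shiftedCell_ae_eq e (fun i => u i) fun _ => 0),
    preimage_dyadicIndex, shiftedCell, closure_pi_set]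
  exact measure_mono (Set.pi_mono fun i _ => preimage_dyadicFloor_subset_closure _ _)

theorem tendsto_preimage_dyadicIndex {e : ℕ → ℕ → ℕ}
    (he : ∀ i, Tendsto (fun k => e k i) atTop atTop) (x : Torus) :
    Tendsto (fun k => dyadicIndex (e k) ⁻¹' {dyadicIndex (e k) x}) atTop (𝓝 x).smallSets := by
  refine tendsto_smallSets_iff.2 fun W hW => ?_
  obtain ⟨I, hI, s, hs, hsW⟩ := Filter.mem_pi.1 (nhds_pi (a := x) ▸ hW)
  have hcoord : ∀ i ∈ I, ∀ᶠ k in atTop,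
      dyadicFloor (e k i) ⁻¹' {dyadicFloor (e k i) (x i)} ⊆ s i := fun i _ =>
    (he i).eventually (tendsto_smallSets_iff.1 (tendsto_preimage_dyadicFloor (x i)) _ (hs i))
  filter_upwards [(eventually_all_finite hI).2 hcoord] with k hk
  rw [preimage_dyadicIndex]
  exact fun y hy => hsW fun i hi => hk i hi (hy i (Set.mem_univ i))

end DyadicIndex

section Configuration

/-- The displacements of the members of an `(ε, d)`-configuration from its central rectangle, in
units of the side lengths. -/
def configShifts (ε : ℝ) (d : ℕ) : Set (ℕ → ℝ) :=
  insert 0 ((fun i => Pi.single i (1 - ε)) '' Set.Iio d)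

/-- The `(ε, d)`-configuration around the dyadic rectangle with exponents `e` and indices `t`. -/
def configFamily (ε : ℝ) (d : ℕ) (e t : ℕ → ℕ) : Set (Set Torus) :=
  shiftedCell e t '' configShifts ε d

/-- The number of consecutive dyadic sides met by an `(ε, d)`-configuration in coordinate `i`. -/
def configWidth (d i : ℕ) : ℕ := if i < d then 2 else 1

variable {ε : ℝ} {d n : ℕ} {e t : ℕ → ℕ}

theorem configFamily_eq (ε : ℝ) (d : ℕ) (e t : ℕ → ℕ) : configFamily ε d e t =
    insert (dyadicCell e t)
      {Q | ∃ i < d, Q = shiftedCell e t fun j => if j = i then 1 - ε else 0} := by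
  have hsingle : ∀ i, (Pi.single i (1 - ε) : ℕ → ℝ) = fun j => if j = i then 1 - ε else 0 :=
    fun i => funext fun j => Pi.single_apply i (1 - ε) j
  rw [configFamily, configShifts, Set.image_insert_eq, Set.image_image]
  refine congrArg (insert (dyadicCell e t)) (Set.ext fun Q => exists_congr fun i => ?_)
  exact and_congr_right fun _ => hsingle i ▸ eq_comm

theorem sUnion_configFamily (ε : ℝ) (d : ℕ) (e t : ℕ → ℕ) :
    ⋃₀ configFamily ε d e t = ⋃ c ∈ configShifts ε d, shiftedCell e t c :=
  Set.sUnion_image _ _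

theorem finite_configShifts (ε : ℝ) (d : ℕ) : (configShifts ε d).Finite :=
  ((Set.finite_Iio d).image _).insert 0

theorem isOpen_sUnion_configFamily (he : ∀ i ≥ n, e i = 0) :
    IsOpen (⋃₀ configFamily ε d e t) := by
  rw [sUnion_configFamily]
  exact isOpen_biUnion fun c _ => isOpen_shiftedCell he t c

theorem closure_sUnion_configFamily_ae_eq (ε : ℝ) (d : ℕ) (e t : ℕ → ℕ) :
    closure (⋃₀ configFamily ε d e t) =ᵐ[μT] ⋃₀ configFamily ε d e t := by
  rw [sUnion_configFamily, (finite_configShifts ε d).closure_biUnion]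
  exact Filter.EventuallyEq.countable_bUnion (finite_configShifts ε d).countable
    fun c _ => closure_shiftedCell_ae_eq e t c

theorem μT_sUnion_configFamily (ε : ℝ) (d : ℕ) (e t : ℕ → ℕ) :
    μT (⋃₀ configFamily ε d e t) = μT (⋃₀ configFamily ε d e 0) := by
  rw [← measure_preimage_add μT (fun i => ((t i / 2 ^ e i : ℝ) : 𝕋)), sUnion_configFamily,
    sUnion_configFamily, Set.preimage_iUnion₂]
  simp only [preimage_add_shiftedCell]

theorem dyadicCell_subset_sUnion_configFamily (ε : ℝ) (d : ℕ) (e t : ℕ → ℕ) :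
    dyadicCell e t ⊆ ⋃₀ configFamily ε d e t :=
  Set.subset_sUnion_of_mem ⟨0, Set.mem_insert _ _, rfl⟩

theorem nonneg_and_add_one_le_configWidth (hε : 0 ≤ ε) (hε' : ε ≤ 1) {c : ℕ → ℝ}
    (hc : c ∈ configShifts ε d) (i : ℕ) : 0 ≤ c i ∧ 1 + c i ≤ configWidth d i := by
  have hwidth : (1 : ℝ) ≤ configWidth d i := by
    unfold configWidth; split_ifs <;> norm_num
  rcases hc with rfl | ⟨j, hj, rfl⟩
  · simpa only [Pi.zero_apply, le_refl, add_zero, true_and] using hwidth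
  · rcases eq_or_ne i j with rfl | hij
    · simp only [Pi.single_eq_same, configWidth, if_pos (Set.mem_Iio.1 hj), Nat.cast_ofNat]
      constructor <;> linarith
    · simpa only [Pi.single_eq_of_ne hij, le_refl, add_zero, true_and] using hwidth

theorem dyadicFloor_mem_Ico_of_mem_sUnion_configFamily (hε : 0 ≤ ε) (hε' : ε ≤ 1)
    {x : Torus} (hx : x ∈ ⋃₀ configFamily ε d e t) {i : ℕ}
    (ht : t i + configWidth d i ≤ 2 ^ e i) :
    dyadicFloor (e i) (x i) ∈ Set.Ico (t i) (t i + configWidth d i) := by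
  rw [sUnion_configFamily] at hx
  obtain ⟨c, hc, hxc⟩ := Set.mem_iUnion₂.1 hx
  obtain ⟨hc₀, hc₁⟩ := nonneg_and_add_one_le_configWidth hε hε' hc i
  have ht' : (t i : ℝ) + configWidth d i ≤ 2 ^ e i := by exact_mod_cast ht
  obtain ⟨hle, hlt⟩ :=
    dyadicFloor_bounds_of_mem_dyadicArc hc₀ (by linarith) (hxc i (Set.mem_univ i))
  refine ⟨hle, ?_⟩
  have hlt' : (dyadicFloor (e i) (x i) : ℝ) < t i + configWidth d i := by linarith
  exact_mod_cast hlt'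

end Configuration

section Refinement

/-- The exponents `e`, increased by `s` in the first `d` coordinates. -/
def refineExpo (d s : ℕ) (e : ℕ → ℕ) (i : ℕ) : ℕ := if i < d then e i + s else e i

/-- Indices, in the grid with exponents `refineExpo d s e`, of the `j`-th of the subcells of the
cell `u` that are lined up along the first coordinate at distance two sides from each other, so
that configurations around them do not meet. -/
def refineIndex (d s : ℕ) {e : ℕ → ℕ} (u : DyadicIndex e) (j i : ℕ) : ℕ :=
  if i < d then 2 ^ s * u i + (if i = 0 then 2 * j else 0) else u i

/-- The `j`-th configuration placed inside the dyadic cell `u`. -/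
def cellConfig (ε : ℝ) (d s : ℕ) {e : ℕ → ℕ} (u : DyadicIndex e) (j : ℕ) : Set (Set Torus) :=
  configFamily ε d (refineExpo d s e) (refineIndex d s u j)

variable {ε : ℝ} {d s n j : ℕ} {e : ℕ → ℕ} {u : DyadicIndex e}

theorem refineIndex_add_configWidth_le_mul (hj : 2 * j + 2 ≤ 2 ^ s) {i : ℕ} (hi : i < d) :
    refineIndex d s u j i + configWidth d i ≤ 2 ^ s * (u i + 1) := by
  simp only [refineIndex, configWidth, if_pos hi, mul_add, mul_one]
  split_ifs <;> omega

theorem refineIndex_add_configWidth_le (hj : 2 * j + 2 ≤ 2 ^ s) (i : ℕ) :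
    refineIndex d s u j i + configWidth d i ≤ 2 ^ refineExpo d s e i := by
  by_cases hi : i < d
  · calc refineIndex d s u j i + configWidth d i ≤ 2 ^ s * (u i + 1) :=
          refineIndex_add_configWidth_le_mul hj hi
      _ ≤ 2 ^ s * 2 ^ e i := Nat.mul_le_mul_left _ (u i).2
      _ = 2 ^ refineExpo d s e i := by rw [refineExpo, if_pos hi, pow_add, mul_comm]
  · simpa only [refineIndex, configWidth, refineExpo, if_neg hi] using Nat.succ_le_of_lt (u i).2

theorem refineIndex_lt (hj : 2 * j + 2 ≤ 2 ^ s) (i : ℕ) :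
    refineIndex d s u j i < 2 ^ refineExpo d s e i := by
  refine lt_of_lt_of_le (Nat.lt_add_of_pos_right ?_) (refineIndex_add_configWidth_le hj i)
  unfold configWidth; split_ifs <;> norm_num

theorem sUnion_cellConfig_subset (hε : 0 ≤ ε) (hε' : ε ≤ 1) (hj : 2 * j + 2 ≤ 2 ^ s) :
    ⋃₀ cellConfig ε d s u j ⊆ dyadicIndex e ⁻¹' {u} := by
  refine fun x hx => funext fun i => Fin.ext ?_
  change dyadicFloor (e i) (x i) = u i
  obtain ⟨hle, hlt⟩ := dyadicFloor_mem_Ico_of_mem_sUnion_configFamily hε hε' hx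
    (refineIndex_add_configWidth_le hj i)
  by_cases hi : i < d
  · have hle' : 2 ^ s * u i ≤ refineIndex d s u j i := by
      rw [refineIndex, if_pos hi]; exact Nat.le_add_right _ _
    have hlt' := hlt.trans_le (refineIndex_add_configWidth_le_mul hj hi)
    rw [refineExpo, if_pos hi] at hle hlt'
    rw [← dyadicFloor_add_div (e i) s]
    exact Nat.div_eq_of_lt_le (by linarith) (by linarith)
  · simp only [refineExpo, refineIndex, configWidth, if_neg hi] at hle hlt
    omega

theorem disjoint_sUnion_cellConfig (hε : 0 ≤ ε) (hε' : ε ≤ 1) (hd : 0 < d) {j' : ℕ}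
    (hj : 2 * j + 2 ≤ 2 ^ s) (hj' : 2 * j' + 2 ≤ 2 ^ s) (hne : j ≠ j') :
    Disjoint (⋃₀ cellConfig ε d s u j) (⋃₀ cellConfig ε d s u j') := by
  refine Set.disjoint_left.2 fun x hx hx' => hne ?_
  have h := dyadicFloor_mem_Ico_of_mem_sUnion_configFamily hε hε' hx
    (refineIndex_add_configWidth_le hj 0)
  have h' := dyadicFloor_mem_Ico_of_mem_sUnion_configFamily hε hε' hx'
    (refineIndex_add_configWidth_le hj' 0)
  simp only [refineIndex, configWidth, if_pos hd, if_true, Set.mem_Ico] at h h'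
  omega

theorem refineExpo_eq_zero (hdn : d ≤ n) (he : ∀ i ≥ n, e i = 0) :
    ∀ i ≥ n, refineExpo d s e i = 0 := fun i hi => by
  rw [refineExpo, if_neg (hdn.trans hi).not_gt, he i hi]

theorem sum_refineExpo (hdn : d ≤ n) :
    ∑ i ∈ Finset.range n, refineExpo d s e i = s * d + ∑ i ∈ Finset.range n, e i := by
  have hadd : ∀ i, refineExpo d s e i = (if i < d then s else 0) + e i := fun i => by
    unfold refineExpo; split_ifs <;> omega
  have hfilter : (Finset.range n).filter (· < d) = Finset.range d := by
    ext i; simp only [Finset.mem_filter, Finset.mem_range]; omega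
  simp only [hadd, Finset.sum_add_distrib, ← Finset.sum_filter, hfilter, Finset.sum_const,
    Finset.card_range, smul_eq_mul, mul_comm d]

theorem mul_μT_preimage_dyadicIndex_le (hdn : d ≤ n) (he : ∀ i ≥ n, e i = 0) :
    2⁻¹ ^ (s * d) * μT (dyadicIndex e ⁻¹' {u}) ≤ μT (⋃₀ cellConfig ε d s u j) := calc
  2⁻¹ ^ (s * d) * μT (dyadicIndex e ⁻¹' {u})
      ≤ 2⁻¹ ^ (s * d) * μT (dyadicCell e fun i => u i) :=
        mul_le_mul_right (μT_preimage_dyadicIndex_le u) _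
  _ = μT (dyadicCell (refineExpo d s e) (refineIndex d s u j)) := by
        rw [dyadicCell, dyadicCell, μT_shiftedCell he,
          μT_shiftedCell (refineExpo_eq_zero hdn he), sum_refineExpo hdn, pow_add]
  _ ≤ μT (⋃₀ cellConfig ε d s u j) :=
        measure_mono (dyadicCell_subset_sUnion_configFamily _ _ _ _)

theorem nonempty_sUnion_cellConfig (hdn : d ≤ n) (he : ∀ i ≥ n, e i = 0) :
    (⋃₀ cellConfig ε d s u j).Nonempty := by
  refine (nonempty_of_measure_ne_zero (μ := μT) ?_).mono
    (dyadicCell_subset_sUnion_configFamily _ _ _ _)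
  rw [dyadicCell, μT_shiftedCell (refineExpo_eq_zero hdn he)]
  exact pow_ne_zero _ (ENNReal.inv_ne_zero.2 ENNReal.ofNat_ne_top)

/-- The union of the first `M` configurations placed inside the dyadic cell `u`. -/
def configBlock (ε : ℝ) (d s M : ℕ) {e : ℕ → ℕ} (u : DyadicIndex e) : Set Torus :=
  ⋃ j : Fin M, ⋃₀ cellConfig ε d s u j

theorem configBlock_subset {M : ℕ} (hε : 0 ≤ ε) (hε' : ε ≤ 1) (hM : 2 * M + 2 ≤ 2 ^ s) :
    configBlock ε d s M u ⊆ dyadicIndex e ⁻¹' {u} :=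
  Set.iUnion_subset fun j => sUnion_cellConfig_subset hε hε' (by omega)

theorem closure_configBlock_ae_eq (ε : ℝ) (d s M : ℕ) (u : DyadicIndex e) :
    closure (configBlock ε d s M u) =ᵐ[μT] configBlock ε d s M u := by
  rw [configBlock, closure_iUnion_of_finite]
  exact Filter.EventuallyEq.countable_iUnion fun j => closure_sUnion_configFamily_ae_eq _ _ _ _

theorem interior_preimage_sdiff_configBlock_nonempty {M : ℕ} (hε : 0 ≤ ε) (hε' : ε ≤ 1)
    (hd : 0 < d) (hdn : d ≤ n) (he : ∀ i ≥ n, e i = 0) (hM : 2 * M + 2 ≤ 2 ^ s) :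
    (interior (dyadicIndex e ⁻¹' {u} \ configBlock ε d s M u)).Nonempty := by
  -- The configuration in position `M` fits in the cell as well, but is not part of the block.
  refine (nonempty_sUnion_cellConfig (ε := ε) (s := s) (j := M) hdn he).mono
    (interior_maximal (Set.subset_sdiff.2 ⟨sUnion_cellConfig_subset hε hε' hM, ?_⟩)
      (isOpen_sUnion_configFamily (refineExpo_eq_zero hdn he)))
  exact Set.disjoint_iUnion_right.2 fun j =>
    disjoint_sUnion_cellConfig hε hε' hd hM (by omega) j.2.ne'

theorem fillsCells_configBlock {M : ℕ} (hε : 0 ≤ ε) (hε' : ε ≤ 1) (hd : 0 < d) (hM : 0 < M)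
    (hMs : 2 * M + 2 ≤ 2 ^ s) {e : ℕ → ℕ → ℕ} (he : ∀ i, Tendsto (fun k => e k i) atTop atTop)
    {n : ℕ → ℕ} (hdn : ∀ k, d ≤ n k) (hn : ∀ k, ∀ i ≥ n k, e k i = 0) :
    FillsCells μT (fun k => dyadicIndex (e k)) (fun _ => configBlock ε d s M)
      (2⁻¹ ^ (s * d)) where
  measurableSet_cell _ := measurableSet_preimage_dyadicIndex
  tendsto_cell := tendsto_preimage_dyadicIndex he
  isOpen k _ := isOpen_iUnion fun _ =>
    isOpen_sUnion_configFamily (refineExpo_eq_zero (hdn k) (hn k))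
  subset_cell _ _ := configBlock_subset hε hε' hMs
  closure_ae_eq _ := closure_configBlock_ae_eq ε d s M
  mul_measure_cell_le k u := (mul_μT_preimage_dyadicIndex_le (hdn k) (hn k)).trans
    (measure_mono (Set.subset_iUnion (fun j : Fin M => ⋃₀ cellConfig ε d s u j) ⟨0, hM⟩))
  interior_sdiff_nonempty k _ :=
    interior_preimage_sdiff_configBlock_nonempty hε hε' hd (hdn k) (hn k) hMs

end Refinement

section Levels

theorem expo_sq_add_self {k : ℕ} (hk : 0 < k) (i : ℕ) :
    expo (k ^ 2 + k) i = if i ≤ k then k else 0 := by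
  obtain ⟨l, rfl⟩ : ∃ l, k = l + 1 := ⟨k - 1, by omega⟩
  have hkOf : kOf ((l + 1) ^ 2 + (l + 1)) = l := by
    rw [kOf, Nat.find_eq_iff]
    exact ⟨le_rfl, fun n hn => by nlinarith⟩
  have hr : (l + 1) ^ 2 + (l + 1) - (l ^ 2 + l) = 2 * l + 2 := by
    have : (l + 1) ^ 2 + (l + 1) = (2 * l + 2) + (l ^ 2 + l) := by ring
    omega
  simp only [expo, hkOf, hr]
  split_ifs <;> omega

theorem isConfig_configFamily_expo (ε : ℝ) {d k : ℕ} (hd : 0 < d) (hdk : d ≤ k) {t : ℕ → ℕ}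
    (ht : ∀ i, t i < 2 ^ expo (k ^ 2 + k) i) :
    IsConfig ε d (dyadicCell (expo (k ^ 2 + k)) t) (configFamily ε d (expo (k ^ 2 + k)) t) := by
  have hk : 0 < k := hd.trans_le hdk
  have hsum : ∑ i ∈ Finset.range (k + 1), expo (k ^ 2 + k) i = (k + 1) * k := by
    rw [Finset.sum_congr rfl fun i hi => (expo_sq_add_self hk i).trans
      (if_pos (Nat.lt_succ_iff.1 (Finset.mem_range.1 hi))), Finset.sum_const, Finset.card_range,
      smul_eq_mul]
  refine ⟨k ^ 2 + k, t, by positivity, ht, rfl, ?_, fun i hi => ?_, configFamily_eq _ _ _ _⟩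
  · rw [dyadicCell, μT_shiftedCell (n := k + 1)
      fun i hi => (expo_sq_add_self hk i).trans (if_neg (by omega)), hsum]
    refine pow_le_pow_of_le_one zero_le (ENNReal.inv_le_one.2 one_le_two) ?_
    have hdk' : d - 1 ≤ k := d.pred_le.trans hdk
    nlinarith
  · rw [expo_sq_add_self hk, if_pos (hi.le.trans hdk)]
    exact Nat.ne_of_gt hk

/-- The exponents that become those of the level `(k + d + s) ^ 2 + (k + d + s)` of the basis when
increased by `s` in the first `d` coordinates. -/
def coarseExpo (d s k i : ℕ) : ℕ :=
  if i < d then k + d else if i ≤ k + d + s then k + d + s else 0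

variable {d : ℕ}

theorem refineExpo_coarseExpo (hd : 0 < d) (s k : ℕ) :
    refineExpo d s (coarseExpo d s k) = expo ((k + d + s) ^ 2 + (k + d + s)) := by
  funext i
  rw [expo_sq_add_self (by omega), refineExpo, coarseExpo]
  split_ifs <;> omega

theorem tendsto_coarseExpo (d s i : ℕ) : Tendsto (fun k => coarseExpo d s k i) atTop atTop := by
  refine tendsto_atTop_mono' atTop ?_ tendsto_id
  filter_upwards [eventually_ge_atTop i] with k hk
  simp only [coarseExpo, id_eq]
  split_ifs <;> omega

theorem coarseExpo_eq_zero (d s k : ℕ) : ∀ i ≥ k + d + s + 1, coarseExpo d s k i = 0 :=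
  fun i hi => by rw [coarseExpo, if_neg (by omega), if_neg (by omega)]

theorem isConfig_cellConfig (ε : ℝ) (hd : 0 < d) {s k j : ℕ} (u : DyadicIndex (coarseExpo d s k))
    (hj : 2 * j + 2 ≤ 2 ^ s) :
    IsConfig ε d (dyadicCell (refineExpo d s (coarseExpo d s k)) (refineIndex d s u j))
      (cellConfig ε d s u j) := by
  have hlt := refineIndex_lt (d := d) (u := u) hj
  rw [cellConfig]
  rw [refineExpo_coarseExpo hd] at hlt ⊢
  exact isConfig_configFamily_expo ε hd (by omega) hlt

end Levels

section Reindexing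

variable {X : Type*} {M : ℕ} [NeZero M] {G : ℕ → Fin M → Set X}

theorem iUnion_div_mod (G : ℕ → Fin M → Set X) :
    ⋃ n, G (n / M) (Fin.ofNat M n) = ⋃ n, ⋃ j, G n j :=
  ((Nat.divModEquiv M).surjective.iUnion_comp fun p => G p.1 p.2).trans (Set.iUnion_prod' _)

theorem pairwise_disjoint_div_mod (hG : Pairwise (Function.onFun Disjoint fun n => ⋃ j, G n j))
    (hG' : ∀ n, Pairwise (Function.onFun Disjoint (G n))) :
    Pairwise (Function.onFun Disjoint fun n => G (n / M) (Fin.ofNat M n)) := by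
  have hprod : Pairwise (Function.onFun Disjoint fun p : ℕ × Fin M => G p.1 p.2) := by
    rintro ⟨n, j⟩ ⟨n', j'⟩ hne
    rcases eq_or_ne n n' with rfl | hn
    · exact hG' n fun hj => hne (congrArg _ hj)
    · exact (hG hn).mono (Set.subset_iUnion (G n) j) (Set.subset_iUnion (G n') j')
  exact hprod.comp_of_injective (Nat.divModEquiv M).injective

end Reindexing

theorem statement11_general {d : ℕ} (hd : 0 < d) {ε : ℝ} (hε : 0 ≤ ε) (hε' : ε ≤ 1) (m : ℕ)
    {U : Set Torus} (hU : IsOpen U) (hU' : U.Nonempty) :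
    ∃ (Q : ℕ → Set Torus) (𝒮 : ℕ → Set (Set Torus)),
      (∀ n, IsConfig ε d (Q n) (𝒮 n)) ∧
      (∀ n, ⋃₀ 𝒮 n ⊆ U) ∧
      (Pairwise fun n₁ n₂ => Disjoint (⋃₀ 𝒮 n₁) (⋃₀ 𝒮 n₂)) ∧
      μT (U \ ⋃ n, ⋃₀ 𝒮 n) = 0 ∧
      ∀ n₁ n₂, n₁ / 2 ^ m = n₂ / 2 ^ m → μT (⋃₀ 𝒮 n₁) = μT (⋃₀ 𝒮 n₂) := by
  let M := 2 ^ m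
  let s := m + 2
  have hM : 0 < M := by positivity
  have hMs : 2 * M + 2 ≤ 2 ^ s := by rw [pow_add]; omega
  have : ∀ k, Finite (DyadicIndex (coarseExpo d s k)) :=
    fun k => finite_dyadicIndex (coarseExpo_eq_zero d s k)
  obtain ⟨b, hbU, hdisj, hcover⟩ := (fillsCells_configBlock hε hε' hd hM hMs
    (tendsto_coarseExpo d s) (n := fun k => k + d + s + 1) (fun k => by omega)
    (coarseExpo_eq_zero d s)).exists_seq_ae_cover (by simp) hU hU'
  let 𝒢 (n : ℕ) (j : Fin M) : Set (Set Torus) := cellConfig ε d s (b n).2 j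
  refine ⟨_, fun n => 𝒢 (n / M) (Fin.ofNat M n), fun n => isConfig_cellConfig ε hd _ (by omega),
    fun n => (Set.subset_iUnion (fun j => ⋃₀ 𝒢 (n / M) j) _).trans (hbU _),
    pairwise_disjoint_div_mod (G := fun n j => ⋃₀ 𝒢 n j) hdisj fun n i j hij =>
      disjoint_sUnion_cellConfig hε hε' hd (by omega) (by omega) (Fin.val_ne_of_ne hij),
    (iUnion_div_mod fun n j => ⋃₀ 𝒢 n j) ▸ hcover, fun n₁ n₂ hn => ?_⟩
  simp only [𝒢, M, hn, cellConfig]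
  rw [μT_sUnion_configFamily, μT_sUnion_configFamily ε d _ (refineIndex _ _ _ _)]

/-- **Theorem (statement 11, Lemma L1).** Fix `d ∈ ℕ`, `ε ∈ (0,1/2]`, `m ∈ ℕ`, and a rectangle
`U ⊆ 𝕋^ω`. Then `U` can be covered, up to a set of measure zero, by a family
`{Eₙ : n ∈ ℕ}` of pairwise disjoint sets `Eₙ = ⋃_{Q ∈ 𝒮ₙ} Q` for some `(ε,d)`-configurations
`𝒮ₙ`, in such a way that `|E_{n₁}| = |E_{n₂}|` whenever `n₁` and `n₂` lie in the same
consecutive block of `2^m` indices. -/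
theorem statement11 (d : ℕ) (hd : 0 < d) (ε : ℝ) (hε : 0 < ε) (hε' : ε ≤ 1 / 2)
    (m : ℕ) (hm : 0 < m) (U : Set Torus) (hU : IsRectangle U) :
    ∃ (Q : ℕ → Set Torus) (𝒮 : ℕ → Set (Set Torus)),
      (∀ n, IsConfig ε d (Q n) (𝒮 n)) ∧
      (Pairwise fun n₁ n₂ => Disjoint (⋃₀ 𝒮 n₁) (⋃₀ 𝒮 n₂)) ∧
      μT (U \ ⋃ n, ⋃₀ 𝒮 n) = 0 ∧
      ∀ n₁ n₂, n₁ / 2 ^ m = n₂ / 2 ^ m → μT (⋃₀ 𝒮 n₁) = μT (⋃₀ 𝒮 n₂) := by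
  obtain ⟨Q, 𝒮, h𝒮, -, hdisj, hcover, hμ⟩ :=
    statement11_general hd hε.le (by linarith) m isOpen_univ Set.univ_nonempty
  exact ⟨Q, 𝒮, h𝒮, hdisj,
    measure_mono_null (Set.sdiff_subset_sdiff_left (Set.subset_univ U)) hcover, hμ⟩
end

section
/- Fix a rectangle U ⊆ T^ω, sequences (d_j)_{j∈ℕ} and (m_j)_{j∈ℕ} of positive integers, and a sequence (ε_j)_{j∈ℕ} with ε_j ∈ (0,1/2]. Then there exists a family 𝒮 = ⋃_{j∈ℕ} ⋃_{n∈ℕ} 𝒮_{j,n} satisfying: (A1) each 𝒮_{j,n} is an (ε_j, d_j)-configuration around some Q_{j,n} ∈ R₀; (A2) for every j ∈ ℕ, the rectangle U is covered, up to a set of measure zero, by the pairwise disjoint sets E_{j,n} := ⋃_{Q ∈ 𝒮_{j,n}} Q, n ∈ ℕ; (A3) for all j₁ < j₂ and n₁, n₂ ∈ ℕ, if Q₁ ∈ 𝒮_{j₁,n₁} and Q₂ ∈ 𝒮_{j₂,n₂}, then Q₁ ∩ Q₂ = ∅ or Q₂ ⊆ Q₁; (A4) there exist subsets Λ_j ⊆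 ℕ such that, setting F_j* := ⋃_{n∈Λ_j} E_{j,n}, the sets F_j* are mutually independent events of probability 2^{-m_j} with respect to the uniform probability measure on U, that is, |⋂_{j∈J} F_j*| = |U| ∏_{j∈J} 2^{-m_j} for every finite nonempty J ⊆ ℕ. -/
open MeasureTheory Filter Metric Topology ENNReal

/-!
The sets are built generation by generation. Given a partition of (almost all of) `U` into open
cells, split every cell into two open pieces, the first of relative measure `2 ^ (-m j)`, and fill
each piece up to a null set with disjoint unions of configurations; `Λ j` selects the
configurations that fill the first pieces. The rectangles of the configurations are connected, so
taking as the next cells what remains of the configurations after removing the boundaries of their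
rectangles makes every later rectangle lie inside or outside each earlier one. Every `F i` with
`i < j` is then a union of cells of generation `j` up to a null set, and `F j` has the same relative
measure in each of these cells: this is independence.

The filling is a Vitali exhaustion argument. A configuration around the lower corner cube of a block
twice as long in the first `d` coordinates stays inside the block and occupies at least the
proportion `2 ^ (-d)` of it, and almost every point of an open set lies in arbitrarily small blocks.
Hence finitely many disjoint configurations fill a fixed proportion of any open set, and iterating
on the complement of their closures exhausts it.
-/

namespace RubioDeFrancia

section OpenPartition

variable {X : Type*} [TopologicalSpace X] [MeasurableSpace X] {μ : Measure X} {G : Set X}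
  {ι : Type*} {P : ι → Set X}

/-- A partition of `G`, up to a `μ`-null set, into pairwise disjoint open subsets. -/
structure IsOpenPartition (μ : Measure X) (G : Set X) (P : ι → Set X) : Prop where
  isOpen : ∀ i, IsOpen (P i)
  subset : ∀ i, P i ⊆ G
  pairwise_disjoint : Pairwise fun i j => Disjoint (P i) (P j)
  measure_sdiff_iUnion : μ (G \ ⋃ i, P i) = 0

namespace IsOpenPartition

lemma update_empty (hG : IsOpen G) [DecidableEq ι] (i : ι) :
    IsOpenPartition μ G (Function.update (fun _ => ∅) i G) where
  isOpen j := by rcases eq_or_ne j i with rfl | h <;> simp [*]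
  subset j := by rcases eq_or_ne j i with rfl | h <;> simp [*]
  pairwise_disjoint j k hjk := by
    rcases eq_or_ne j i with rfl | h
    · simp [Function.update_of_ne hjk.symm]
    · simp [h]
  measure_sdiff_iUnion := by
    have hsub := Set.subset_iUnion (Function.update (fun _ => ∅) i G) i
    rw [Set.sdiff_eq_empty.2 (by simpa using hsub), measure_empty]

lemma eq_of_mem (h : IsOpenPartition μ G P) {i j : ι} {x : X} (hi : x ∈ P i) (hj : x ∈ P j) :
    i = j :=
  h.pairwise_disjoint.eq (Set.not_disjoint_iff.2 ⟨x, hi, hj⟩)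

lemma comp_equiv (h : IsOpenPartition μ G P) {κ : Type*} (e : κ ≃ ι) :
    IsOpenPartition μ G (P ∘ e) where
  isOpen k := h.isOpen (e k)
  subset k := h.subset (e k)
  pairwise_disjoint := h.pairwise_disjoint.comp_of_injective e.injective
  measure_sdiff_iUnion := by
    simpa only [Function.comp_apply, e.surjective.iUnion_comp P] using h.measure_sdiff_iUnion

lemma sigma [Countable ι] (h : IsOpenPartition μ G P) {κ : ι → Type*} {R : ∀ i, κ i → Set X}
    (hR : ∀ i, IsOpenPartition μ (P i) (R i)) :
    IsOpenPartition μ G fun p : Σ i, κ i => R p.1 p.2 where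
  isOpen p := (hR p.1).isOpen p.2
  subset p := ((hR p.1).subset p.2).trans (h.subset p.1)
  pairwise_disjoint := by
    rintro ⟨i, k⟩ ⟨j, l⟩ hne
    rcases eq_or_ne i j with rfl | hij
    · exact (hR i).pairwise_disjoint fun hkl => hne (congrArg (Sigma.mk i) hkl)
    · exact (h.pairwise_disjoint hij).mono ((hR i).subset k) ((hR j).subset l)
  measure_sdiff_iUnion := by
    refine measure_mono_null (t := (G \ ⋃ i, P i) ∪ ⋃ i, P i \ ⋃ k, R i k) ?_
      (measure_union_null h.measure_sdiff_iUnion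
        (measure_iUnion_null fun i => (hR i).measure_sdiff_iUnion))
    rintro x ⟨hxG, hx⟩
    by_cases hxP : x ∈ ⋃ i, P i
    · obtain ⟨i, hi⟩ := Set.mem_iUnion.1 hxP
      refine Or.inr (Set.mem_iUnion.2 ⟨i, hi, fun hxR => hx ?_⟩)
      obtain ⟨k, hk⟩ := Set.mem_iUnion.1 hxR
      exact Set.mem_iUnion.2 ⟨⟨i, k⟩, hk⟩
    · exact Or.inl ⟨hxG, hxP⟩

lemma shrink [Countable ι] (h : IsOpenPartition μ G P) {R : ι → Set X} (hR : ∀ i, IsOpen (R i))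
    (hRP : ∀ i, R i ⊆ P i) (hnull : ∀ i, μ (P i \ R i) = 0) : IsOpenPartition μ G R where
  isOpen := hR
  subset i := (hRP i).trans (h.subset i)
  pairwise_disjoint _ _ hij := (h.pairwise_disjoint hij).mono (hRP _) (hRP _)
  measure_sdiff_iUnion := by
    refine measure_mono_null (t := (G \ ⋃ i, P i) ∪ ⋃ i, P i \ R i) ?_
      (measure_union_null h.measure_sdiff_iUnion (measure_iUnion_null hnull))
    rintro x ⟨hxG, hx⟩
    simp only [Set.mem_iUnion, not_exists] at hx
    by_cases hxP : x ∈ ⋃ i, P i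
    · obtain ⟨i, hi⟩ := Set.mem_iUnion.1 hxP
      exact Or.inr (Set.mem_iUnion.2 ⟨i, hi, hx i⟩)
    · exact Or.inl ⟨hxG, hxP⟩

lemma measure_eq_tsum [OpensMeasurableSpace X] [Countable ι] (h : IsOpenPartition μ G P)
    {Y : Set X} (hY : Y ⊆ G) : μ Y = ∑' i, μ (P i ∩ Y) := by
  have hnull : μ (Y \ ⋃ i, P i) = 0 :=
    measure_mono_null (Set.sdiff_subset_sdiff_left hY) h.measure_sdiff_iUnion
  have hmeas : ∀ i, MeasurableSet (P i) := fun i => (h.isOpen i).measurableSet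
  calc μ Y = μ ((⋃ i, P i) ∩ Y) := by
        rw [← measure_inter_add_sdiff Y (MeasurableSet.iUnion hmeas), hnull, add_zero,
          Set.inter_comm]
    _ = ∑' i, μ (P i ∩ Y) := by
        simp only [← Measure.restrict_apply (hmeas _),
          ← Measure.restrict_apply (MeasurableSet.iUnion hmeas)]
        exact measure_iUnion h.pairwise_disjoint hmeas

lemma measure_inter_eq_mul [OpensMeasurableSpace X] [Countable ι] (h : IsOpenPartition μ G P)
    {Y F : Set X} (hY : Y ⊆ G) (hYP : ∀ i, P i ⊆ Y ∨ Disjoint (P i) Y) {θ : ℝ≥0∞}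
    (hF : ∀ i, μ (P i ∩ F) = θ * μ (P i)) : μ (Y ∩ F) = θ * μ Y := by
  rw [h.measure_eq_tsum (Set.inter_subset_left.trans hY), h.measure_eq_tsum hY,
    ← ENNReal.tsum_mul_left]
  refine tsum_congr fun i => ?_
  rcases hYP i with hi | hi
  · rw [← Set.inter_assoc, Set.inter_eq_left.2 hi, hF i]
  · rw [← Set.inter_assoc, hi.inter_eq, Set.empty_inter, measure_empty, mul_zero]

end IsOpenPartition

end OpenPartition

section Divisible

variable {X : Type*} [TopologicalSpace X] [MeasurableSpace X]

/-- Every open set splits, up to a null set, into two disjoint open pieces of any prescribed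
proportion; `true` indexes the piece of proportion `θ`. -/
def IsOpenDivisible (μ : Measure X) : Prop :=
  ∀ ⦃G : Set X⦄, IsOpen G → ∀ θ ≤ (1 : ℝ≥0∞),
    ∃ P : Bool → Set X, IsOpenPartition μ G P ∧ μ (P true) = θ * μ G

variable {Y : Type*} [TopologicalSpace Y] [LinearOrder Y] {μ : Measure X} {f : X → Y}

lemma isOpenPartition_lt_gt [OrderClosedTopology Y] (hf : Continuous f) {G : Set X} (hG : IsOpen G)
    {y : Y} (hy : μ (f ⁻¹' {y}) = 0) :
    IsOpenPartition μ G fun b : Bool => G ∩ {x | bif b then f x < y else y < f x} where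
  isOpen := by
    rintro (_ | _)
    · exact hG.inter (isOpen_lt continuous_const hf)
    · exact hG.inter (isOpen_lt hf continuous_const)
  subset _ := Set.inter_subset_left
  pairwise_disjoint := by
    rintro (_ | _) (_ | _) hne
    · exact absurd rfl hne
    · exact Set.disjoint_left.2 fun x hx hx' => lt_asymm hx.2 hx'.2
    · exact Set.disjoint_left.2 fun x hx hx' => lt_asymm hx.2 hx'.2
    · exact absurd rfl hne
  measure_sdiff_iUnion := by
    refine measure_mono_null ?_ hy
    rintro x ⟨hxG, hx⟩
    simp only [Set.mem_iUnion, Bool.exists_bool, not_or] at hx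
    exact le_antisymm (not_lt.1 fun h => hx.1 ⟨hxG, h⟩) (not_lt.1 fun h => hx.2 ⟨hxG, h⟩)

lemma continuous_measure_inter_lt [OpensMeasurableSpace X] [OrderTopology Y]
    [FirstCountableTopology Y] [IsFiniteMeasure μ] (hf : Continuous f)
    (hnull : ∀ y, μ (f ⁻¹' {y}) = 0) {G : Set X} (hG : MeasurableSet G) :
    Continuous fun y => μ (G ∩ {x | f x < y}) := by
  have hmeas : ∀ y, MeasurableSet (G ∩ {x | f x < y}) := fun y =>
    hG.inter (isOpen_lt hf continuous_const).measurableSet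
  refine continuous_iff_continuousAt.2 fun y => ?_
  refine tendsto_measure_of_ae_tendsto_indicator_of_isFiniteMeasure (𝓝 y) (hmeas y) hmeas ?_
  filter_upwards [measure_eq_zero_iff_ae_notMem.1 (hnull y)] with x hx
  rcases lt_or_gt_of_ne (show f x ≠ y from hx) with hlt | hgt
  · filter_upwards [lt_mem_nhds hlt] with z hz
    simp [hlt, hz]
  · filter_upwards [gt_mem_nhds hgt] with z hz
    simp [hgt.not_gt, hz.not_gt]

theorem isOpenDivisible_of_continuous [OpensMeasurableSpace X] [OrderTopology Y]
    [FirstCountableTopology Y] [BoundedOrder Y] [PreconnectedSpace Y] [IsFiniteMeasure μ]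
    (hf : Continuous f) (hnull : ∀ y, μ (f ⁻¹' {y}) = 0) : IsOpenDivisible μ := by
  intro G hG θ hθ
  have htop : μ (G ∩ {x | f x < ⊤}) = μ G :=
    measure_inter_conull (measure_mono_null (fun x hx => not_lt_top_iff.1 hx) (hnull ⊤))
  obtain ⟨y, hy⟩ := mem_range_of_exists_le_of_exists_ge
    (continuous_measure_inter_lt hf hnull hG.measurableSet) (c := θ * μ G)
    ⟨⊥, by simp⟩ ⟨⊤, htop.symm ▸ mul_le_of_le_one_left' hθ⟩
  exact ⟨_, isOpenPartition_lt_gt hf hG (hnull y), hy⟩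

end Divisible

section Vitali

variable {X : Type*} {𝓔 𝒟 𝒟' : Set (Set X)} {G G' : Set X}

/-- A pairwise disjoint subfamily of `𝓔` consisting of subsets of `G`. -/
structure IsPacking (𝓔 : Set (Set X)) (G : Set X) (𝒟 : Set (Set X)) : Prop where
  subset : 𝒟 ⊆ 𝓔
  sUnion_subset : ⋃₀ 𝒟 ⊆ G
  pairwiseDisjoint : 𝒟.PairwiseDisjoint id

namespace IsPacking

lemma empty : IsPacking 𝓔 G ∅ where
  subset := Set.empty_subset _
  sUnion_subset := by simp
  pairwiseDisjoint := Set.pairwiseDisjoint_empty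

lemma union (h : IsPacking 𝓔 G 𝒟) (h' : IsPacking 𝓔 (G \ ⋃₀ 𝒟) 𝒟') :
    IsPacking 𝓔 G (𝒟 ∪ 𝒟') where
  subset := Set.union_subset h.subset h'.subset
  sUnion_subset := by
    rw [Set.sUnion_union]
    exact Set.union_subset h.sUnion_subset (h'.sUnion_subset.trans Set.sdiff_subset)
  pairwiseDisjoint := Set.pairwiseDisjoint_union.2 ⟨h.pairwiseDisjoint, h'.pairwiseDisjoint,
    fun _ hE _ hE' _ => Set.disjoint_of_subset (Set.subset_sUnion_of_mem hE)
      ((Set.subset_sUnion_of_mem hE').trans h'.sUnion_subset) Set.disjoint_sdiff_right⟩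

lemma mono (h : IsPacking 𝓔 G 𝒟) (hG : G ⊆ G') : IsPacking 𝓔 G' 𝒟 :=
  ⟨h.subset, h.sUnion_subset.trans hG, h.pairwiseDisjoint⟩

lemma iUnion_of_monotone {𝒟 : ℕ → Set (Set X)} (h : ∀ n, IsPacking 𝓔 G (𝒟 n))
    (hmono : Monotone 𝒟) : IsPacking 𝓔 G (⋃ n, 𝒟 n) where
  subset := Set.iUnion_subset fun n => (h n).subset
  sUnion_subset := by
    rw [Set.sUnion_iUnion]
    exact Set.iUnion_subset fun n => (h n).sUnion_subset
  pairwiseDisjoint :=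
    (Set.pairwiseDisjoint_iUnion hmono.directed_le).2 fun n => (h n).pairwiseDisjoint

lemma isOpenPartition [TopologicalSpace X] [MeasurableSpace X] {μ : Measure X}
    (h : IsPacking 𝓔 G 𝒟) (hopen : ∀ E ∈ 𝓔, IsOpen E) (hnull : μ (G \ ⋃₀ 𝒟) = 0) :
    IsOpenPartition μ G ((↑) : 𝒟 → Set X) where
  isOpen E := hopen E (h.subset E.2)
  subset E := (Set.subset_sUnion_of_mem E.2).trans h.sUnion_subset
  pairwise_disjoint := h.pairwiseDisjoint.subtype
  measure_sdiff_iUnion := by rwa [← Set.sUnion_eq_iUnion]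

end IsPacking

variable [TopologicalSpace X] [MeasurableSpace X] {μ : Measure X}

lemma measure_closure_sUnion_sdiff (hfin : 𝒟.Finite) (h : ∀ E ∈ 𝒟, μ (frontier E) = 0) :
    μ (closure (⋃₀ 𝒟) \ ⋃₀ 𝒟) = 0 := by
  refine measure_mono_null ?_ ((measure_biUnion_null_iff hfin.countable).2 h)
  rw [hfin.closure_sUnion]
  rintro x ⟨hx, hx'⟩
  obtain ⟨E, hE, hxE⟩ := Set.mem_iUnion₂.1 hx
  exact Set.mem_iUnion₂.2 ⟨E, hE, hxE, fun hint => hx' ⟨E, hE, interior_subset hint⟩⟩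

/-- The hypotheses of a Vitali covering theorem: the members of `𝓔` are open with null boundary,
and finitely many disjoint ones fill a fixed proportion of any open set. -/
structure IsVitaliClass (μ : Measure X) (𝓔 : Set (Set X)) : Prop where
  isOpen : ∀ E ∈ 𝓔, IsOpen E
  measure_frontier : ∀ E ∈ 𝓔, μ (frontier E) = 0
  exists_packing : ∃ c ≠ (0 : ℝ≥0∞), ∀ G, IsOpen G →
    ∃ 𝒟, IsPacking 𝓔 G 𝒟 ∧ 𝒟.Finite ∧ c * μ G ≤ μ (⋃₀ 𝒟)

/-- A finite packing of `G` leaving a set of positive measure uncovered. -/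
structure IsPartialPacking (μ : Measure X) (𝓔 : Set (Set X)) (G : Set X) (𝒟 : Set (Set X)) :
    Prop extends IsPacking 𝓔 G 𝒟 where
  finite : 𝒟.Finite
  measure_sdiff_ne_zero : μ (G \ ⋃₀ 𝒟) ≠ 0

namespace IsVitaliClass

variable [OpensMeasurableSpace X] [IsFiniteMeasure μ]

lemma exists_partialPacking (h : IsVitaliClass μ 𝓔) (hμ : IsOpenDivisible μ) :
    ∃ r < (1 : ℝ≥0∞), ∀ G, IsOpen G → μ G ≠ 0 →
      ∃ 𝒟, IsPartialPacking μ 𝓔 G 𝒟 ∧ μ (G \ ⋃₀ 𝒟) ≤ r * μ G := by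
  obtain ⟨c, hc, hpack⟩ := h.exists_packing
  refine ⟨1 - c * 2⁻¹, ENNReal.sub_lt_self one_ne_top one_ne_zero (by simp [hc]),
    fun G hG hG0 => ?_⟩
  obtain ⟨P, hP, hPG⟩ := hμ hG 2⁻¹ (by simp)
  obtain ⟨𝒟, h𝒟, hfin, hle⟩ := hpack (P true) (hP.isOpen true)
  have hmeas : MeasurableSet (⋃₀ 𝒟) :=
    (isOpen_sUnion fun E hE => h.isOpen E (h𝒟.subset hE)).measurableSet
  have h𝒟G := h𝒟.mono (hP.subset true)
  refine ⟨𝒟, ⟨h𝒟G, hfin, fun hzero => ?_⟩, ?_⟩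
  · have hhalf : μ G ≤ 2⁻¹ * μ G := calc
      μ G ≤ μ (⋃₀ 𝒟) := measure_mono_ae (ae_le_set.2 hzero)
      _ ≤ μ (P true) := measure_mono h𝒟.sUnion_subset
      _ = 2⁻¹ * μ G := hPG
    rw [mul_comm, ← div_eq_mul_inv] at hhalf
    exact hhalf.not_gt (ENNReal.half_lt_self hG0 (measure_ne_top μ G))
  · rw [measure_sdiff h𝒟G.sUnion_subset hmeas.nullMeasurableSet (measure_ne_top μ _),
      ENNReal.sub_mul fun _ _ => measure_ne_top μ G, one_mul, mul_assoc, ← hPG]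
    exact tsub_le_tsub_left hle _

lemma exists_partialPacking_superset (h : IsVitaliClass μ 𝓔) (hμ : IsOpenDivisible μ) :
    ∃ r < (1 : ℝ≥0∞), ∀ G, IsOpen G → ∀ 𝒟, IsPartialPacking μ 𝓔 G 𝒟 →
      ∃ 𝒟' ⊇ 𝒟, IsPartialPacking μ 𝓔 G 𝒟' ∧ μ (G \ ⋃₀ 𝒟') ≤ r * μ (G \ ⋃₀ 𝒟) := by
  obtain ⟨r, hr, hpack⟩ := h.exists_partialPacking hμ
  refine ⟨r, hr, fun G hG 𝒟 h𝒟 => ?_⟩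
  have hnull := measure_closure_sUnion_sdiff h𝒟.finite
    fun E hE => h.measure_frontier E (h𝒟.subset hE)
  have hsub : G \ closure (⋃₀ 𝒟) ⊆ G \ ⋃₀ 𝒟 := Set.sdiff_subset_sdiff_right subset_closure
  have hclosure : ∀ Y, μ ((G \ closure (⋃₀ 𝒟)) \ Y) = μ ((G \ ⋃₀ 𝒟) \ Y) := fun Y =>
    measure_eq_measure_of_null_sdiff (Set.sdiff_subset_sdiff_left hsub)
      (measure_mono_null (by grind) hnull)
  have hremainder : μ (G \ closure (⋃₀ 𝒟)) = μ (G \ ⋃₀ 𝒟) := by simpa using hclosure ∅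
  obtain ⟨𝒟', h𝒟', hle⟩ := hpack _ (hG.sdiff isClosed_closure)
    (hremainder ▸ h𝒟.measure_sdiff_ne_zero)
  have hunion : G \ ⋃₀ (𝒟 ∪ 𝒟') = (G \ ⋃₀ 𝒟) \ ⋃₀ 𝒟' := by
    rw [Set.sUnion_union, Set.sdiff_sdiff]
  refine ⟨𝒟 ∪ 𝒟', Set.subset_union_left,
    ⟨h𝒟.union (h𝒟'.toIsPacking.mono hsub), h𝒟.finite.union h𝒟'.finite, ?_⟩, ?_⟩
  · rw [hunion, ← hclosure]
    exact h𝒟'.measure_sdiff_ne_zero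
  · rwa [hunion, ← hclosure, ← hremainder]

lemma exists_monotone_partialPacking (h : IsVitaliClass μ 𝓔) (hμ : IsOpenDivisible μ)
    (hG : IsOpen G) (hG0 : μ G ≠ 0) :
    ∃ r < (1 : ℝ≥0∞), ∃ 𝒟 : ℕ → Set (Set X), Monotone 𝒟 ∧
      ∀ n, IsPartialPacking μ 𝓔 G (𝒟 n) ∧ μ (G \ ⋃₀ 𝒟 n) ≤ r ^ n * μ G := by
  obtain ⟨r, hr, hext⟩ := h.exists_partialPacking_superset hμ
  choose! next hsup hnext hle using hext G hG
  let 𝒟 : ℕ → Set (Set X) := fun n => next^[n] ∅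
  have hsucc : ∀ n, 𝒟 (n + 1) = next (𝒟 n) := fun n => Function.iterate_succ_apply' next n ∅
  have hpartial : ∀ n, IsPartialPacking μ 𝓔 G (𝒟 n) := by
    intro n
    induction n with
    | zero => exact ⟨.empty, Set.finite_empty, by simpa [𝒟] using hG0⟩
    | succ n ih => exact hsucc n ▸ hnext _ ih
  refine ⟨r, hr, 𝒟, monotone_nat_of_le_succ fun n => hsucc n ▸ hsup _ (hpartial n),
    fun n => ⟨hpartial n, ?_⟩⟩
  induction n with
  | zero => simp [𝒟]
  | succ n ih =>
    calc μ (G \ ⋃₀ 𝒟 (n + 1)) ≤ r * μ (G \ ⋃₀ 𝒟 n) := hsucc n ▸ hle _ (hpartial n)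
      _ ≤ r * (r ^ n * μ G) := by gcongr
      _ = r ^ (n + 1) * μ G := by rw [pow_succ']; ring

lemma exists_countable_packing (h : IsVitaliClass μ 𝓔) (hμ : IsOpenDivisible μ)
    (hG : IsOpen G) :
    ∃ 𝒟, IsPacking 𝓔 G 𝒟 ∧ 𝒟.Countable ∧ μ (G \ ⋃₀ 𝒟) = 0 ∧ (μ G ≠ 0 → 𝒟.Infinite) := by
  rcases eq_or_ne (μ G) 0 with hG0 | hG0
  · exact ⟨∅, .empty, Set.countable_empty, by simpa using hG0, fun h => absurd hG0 h⟩
  obtain ⟨r, hr, 𝒟, hmono, h𝒟⟩ := h.exists_monotone_partialPacking hμ hG hG0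
  have hle : ∀ n, μ (G \ ⋃₀ ⋃ n, 𝒟 n) ≤ r ^ n * μ G := fun n =>
    (measure_mono (Set.sdiff_subset_sdiff_right
      (Set.sUnion_mono (Set.subset_iUnion 𝒟 n)))).trans (h𝒟 n).2
  have hlim := ENNReal.Tendsto.mul_const (b := μ G)
    (ENNReal.tendsto_pow_atTop_nhds_zero_of_lt_one hr) (Or.inr (measure_ne_top μ G))
  rw [zero_mul] at hlim
  have hnull : μ (G \ ⋃₀ ⋃ n, 𝒟 n) = 0 := le_antisymm (ge_of_tendsto' hlim hle) zero_le
  refine ⟨⋃ n, 𝒟 n, .iUnion_of_monotone (fun n => (h𝒟 n).1.toIsPacking) hmono,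
    Set.countable_iUnion fun n => (h𝒟 n).1.finite.countable, hnull, fun _ hfin => ?_⟩
  obtain ⟨n, hn⟩ := hmono.directed_le.exists_mem_subset_of_finset_subset_biUnion
    hfin.coe_toFinset.subset
  rw [hfin.coe_toFinset] at hn
  exact (h𝒟 n).1.measure_sdiff_ne_zero (measure_mono_null
    (Set.sdiff_subset_sdiff_right (Set.sUnion_mono hn)) hnull)

theorem exists_isOpenPartition_refinement (h : IsVitaliClass μ 𝓔) (hμ : IsOpenDivisible μ)
    {ι : Type*} [Countable ι] {B : ι → Set X} (hB : IsOpenPartition μ G B) (hG0 : μ G ≠ 0) :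
    ∃ (E : ℕ → Set X) (π : ℕ → ι),
      IsOpenPartition μ G E ∧ ∀ n, E n ∈ 𝓔 ∧ E n ⊆ B (π n) := by
  choose 𝒟 h𝒟 hcount hnull hinf using fun i => h.exists_countable_packing hμ (hB.isOpen i)
  obtain ⟨i, hi⟩ : ∃ i, μ (B i) ≠ 0 := by
    by_contra! hzero
    exact hG0 (by simp [hB.measure_eq_tsum subset_rfl, measure_inter_null_of_null_left, hzero])
  have := fun i => (hcount i).to_subtype
  have : Infinite (𝒟 i) := (hinf i hi).to_subtype
  have : Infinite (Σ i, 𝒟 i) := .of_injective _ (sigma_mk_injective (i := i))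
  obtain ⟨e⟩ := nonempty_equiv_of_countable (α := ℕ) (β := Σ i, 𝒟 i)
  refine ⟨fun n => (e n).2, fun n => (e n).1, ?_, fun n =>
    ⟨(h𝒟 _).subset (e n).2.2, (Set.subset_sUnion_of_mem (e n).2.2).trans (h𝒟 _).sUnion_subset⟩⟩
  exact (hB.sigma fun i => (h𝒟 i).isOpenPartition h.isOpen (hnull i)).comp_equiv e

end IsVitaliClass

end Vitali

section TileFamily

variable {X : Type*} [TopologicalSpace X] {S : Set (Set X)}

/-- The part of `⋃₀ S` off the boundaries of the members of `S`. A connected subset of it lies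
inside or outside each member, so subdividing it produces sets nested with respect to `S`. -/
def core (S : Set (Set X)) : Set X := ⋃₀ S \ ⋃ Q ∈ S, frontier Q

lemma core_subset (S : Set (Set X)) : core S ⊆ ⋃₀ S := Set.sdiff_subset

lemma inter_eq_empty_or_subset_of_subset_core {Q R : Set X} (hQ : Q ∈ S) (hopen : IsOpen Q)
    (hR : IsPreconnected R) (hcore : R ⊆ core S) : Q ∩ R = ∅ ∨ R ⊆ Q := by
  have hcover : R ⊆ Q ∪ (closure Q)ᶜ := fun x hx => by
    by_contra! hx'
    simp only [Set.mem_union, Set.mem_compl_iff, not_or, not_not] at hx'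
    exact (hcore hx).2 (Set.mem_biUnion hQ (hopen.frontier_eq ▸ ⟨hx'.2, hx'.1⟩))
  refine (hR.subset_or_subset hopen isClosed_closure.isOpen_compl
    (disjoint_compl_right.mono_left subset_closure) hcover).symm.imp_left fun hout => ?_
  exact (disjoint_compl_right.mono subset_closure hout).inter_eq

/-- A finite family of connected open sets with null boundary. -/
structure IsTileFamily [MeasurableSpace X] (μ : Measure X) (S : Set (Set X)) : Prop where
  finite : S.Finite
  isOpen : ∀ Q ∈ S, IsOpen Q
  isPreconnected : ∀ Q ∈ S, IsPreconnected Q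
  measure_frontier : ∀ Q ∈ S, μ (frontier Q) = 0

namespace IsTileFamily

variable [MeasurableSpace X] {μ : Measure X}

lemma isOpen_core (h : IsTileFamily μ S) : IsOpen (core S) :=
  (isOpen_sUnion h.isOpen).sdiff (h.finite.isClosed_biUnion fun _ _ => isClosed_frontier)

lemma measure_sUnion_sdiff_core (h : IsTileFamily μ S) : μ (⋃₀ S \ core S) = 0 := by
  rw [core, Set.sdiff_sdiff_right_self]
  exact measure_mono_null Set.inter_subset_right
    ((measure_biUnion_null_iff h.finite.countable).2 h.measure_frontier)

lemma measure_frontier_sUnion (h : IsTileFamily μ S) : μ (frontier (⋃₀ S)) = 0 := by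
  rw [(isOpen_sUnion h.isOpen).frontier_eq]
  exact measure_closure_sUnion_sdiff h.finite h.measure_frontier

end IsTileFamily

end TileFamily

section Generation

variable {X : Type*} {𝒮 : ℕ → Set (Set X)} {Λ : Set ℕ}

/-- The union of the families `𝒮 n` with `n ∈ Λ`. -/
def selectedUnion (𝒮 : ℕ → Set (Set X)) (Λ : Set ℕ) : Set X := ⋃ n ∈ Λ, ⋃₀ 𝒮 n

variable [TopologicalSpace X] [MeasurableSpace X] {μ : Measure X} {𝒦 : Set (Set (Set X))}
  {θ : ℝ≥0∞} {G : Set X} {A : ℕ → Set X}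

/-- One step of the construction: families `𝒮 n` from `𝒦` whose unions partition `G` and refine
the partition `A`, those with index in `Λ` occupying the proportion `θ` of every cell of `A`. -/
structure IsGeneration (μ : Measure X) (𝒦 : Set (Set (Set X))) (θ : ℝ≥0∞) (G : Set X)
    (A : ℕ → Set X) (𝒮 : ℕ → Set (Set X)) (Λ : Set ℕ) : Prop where
  mem : ∀ n, 𝒮 n ∈ 𝒦
  isOpenPartition : IsOpenPartition μ G fun n => ⋃₀ 𝒮 n
  refines : ∀ n, ∃ k, ⋃₀ 𝒮 n ⊆ A k
  measure_inter : ∀ k, μ (A k ∩ selectedUnion 𝒮 Λ) = θ * μ (A k)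

theorem exists_isGeneration [OpensMeasurableSpace X] [IsFiniteMeasure μ]
    (hμ : IsOpenDivisible μ) (h𝒦 : IsVitaliClass μ (Set.sUnion '' 𝒦)) (hθ : θ ≤ 1)
    (hG0 : μ G ≠ 0) (hA : IsOpenPartition μ G A) :
    ∃ 𝒮 Λ, IsGeneration μ 𝒦 θ G A 𝒮 Λ := by
  choose P hP hPA using fun k => hμ (hA.isOpen k) θ hθ
  have hB := hA.sigma hP
  obtain ⟨E, π, hE, hEB⟩ := h𝒦.exists_isOpenPartition_refinement hμ hB hG0
  choose 𝒮 h𝒮 hSE using fun n => (hEB n).1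
  obtain rfl : (fun n => ⋃₀ 𝒮 n) = E := funext hSE
  refine ⟨𝒮, {n | (π n).2 = true}, h𝒮, hE,
    fun n => ⟨(π n).1, (hEB n).2.trans ((hP _).subset _)⟩, fun k => ?_⟩
  rw [← hPA k]
  refine measure_eq_measure_of_null_sdiff ?_ (measure_mono_null ?_ hE.measure_sdiff_iUnion)
  · rintro x ⟨hxA, hx⟩
    obtain ⟨n, hn, hxn⟩ := Set.mem_iUnion₂.1 hx
    have hxP : x ∈ P (π n).1 (π n).2 := (hEB n).2 hxn
    rw [hA.eq_of_mem hxA ((hP _).subset _ hxP), ← show (π n).2 = true from hn]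
    exact hxP
  · rintro x ⟨hxP, hx⟩
    refine ⟨hB.subset ⟨k, true⟩ hxP, fun hxE => hx ⟨(hP k).subset true hxP, ?_⟩⟩
    obtain ⟨n, hn⟩ := Set.mem_iUnion.1 hxE
    have hπ : ⟨k, true⟩ = π n := hB.eq_of_mem (i := ⟨k, true⟩) hxP ((hEB n).2 hn)
    exact Set.mem_biUnion (show (π n).2 = true from hπ ▸ rfl) hn

/-- Successive generations, each refining the cores of the families of the previous one. -/
structure IsGenerationSeq (μ : Measure X) (𝒦 : ℕ → Set (Set (Set X))) (θ : ℕ → ℝ≥0∞)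
    (G : Set X) (A : ℕ → ℕ → Set X) (𝒮 : ℕ → ℕ → Set (Set X)) (Λ : ℕ → Set ℕ) : Prop where
  isOpenPartition : ∀ j, IsOpenPartition μ G (A j)
  isGeneration : ∀ j, IsGeneration μ (𝒦 j) (θ j) G (A j) (𝒮 j) (Λ j)
  cell_succ : ∀ j n, A (j + 1) n = core (𝒮 j n)

theorem exists_isGenerationSeq [OpensMeasurableSpace X] [IsFiniteMeasure μ]
    (hμ : IsOpenDivisible μ) {𝒦 : ℕ → Set (Set (Set X))}
    (h𝒦 : ∀ j, IsVitaliClass μ (Set.sUnion '' 𝒦 j)) (htile : ∀ j, ∀ S ∈ 𝒦 j, IsTileFamily μ S)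
    {θ : ℕ → ℝ≥0∞} (hθ : ∀ j, θ j ≤ 1) (hG : IsOpen G) (hG0 : μ G ≠ 0) :
    ∃ A 𝒮 Λ, IsGenerationSeq μ 𝒦 θ G A 𝒮 Λ := by
  choose 𝒮 Λ hgen using fun j (A : {A : ℕ → Set X // IsOpenPartition μ G A}) =>
    exists_isGeneration hμ (h𝒦 j) (hθ j) hG0 A.2
  have hcore : ∀ j A, IsOpenPartition μ G fun n => core (𝒮 j A n) := fun j A =>
    have htiles := fun n => htile j _ ((hgen j A).mem n)
    (hgen j A).isOpenPartition.shrink (fun n => (htiles n).isOpen_core)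
      (fun n => core_subset _) fun n => (htiles n).measure_sUnion_sdiff_core
  let A : ℕ → {A : ℕ → Set X // IsOpenPartition μ G A} :=
    Nat.rec ⟨_, .update_empty hG 0⟩ fun j A => ⟨_, hcore j A⟩
  exact ⟨fun j => (A j).1, fun j => 𝒮 j (A j), fun j => Λ j (A j), fun j => (A j).2,
    fun j => hgen j (A j), fun _ _ => rfl⟩

namespace IsGenerationSeq

variable {𝒦 : ℕ → Set (Set (Set X))} {θ : ℕ → ℝ≥0∞} {A : ℕ → ℕ → Set X}
  {𝒮 : ℕ → ℕ → Set (Set X)} {Λ : ℕ → Set ℕ} {i j : ℕ}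

lemma exists_cell_superset (h : IsGenerationSeq μ 𝒦 θ G A 𝒮 Λ) (hij : i ≤ j) (n : ℕ) :
    ∃ k, A j n ⊆ A i k := by
  induction j, hij using Nat.le_induction generalizing n with
  | base => exact ⟨n, subset_rfl⟩
  | succ j _ ih =>
    obtain ⟨k, hk⟩ := (h.isGeneration j).refines n
    obtain ⟨l, hl⟩ := ih k
    exact ⟨l, (h.cell_succ j n ▸ core_subset _).trans (hk.trans hl)⟩

lemma exists_cell_subset_core (h : IsGenerationSeq μ 𝒦 θ G A 𝒮 Λ) (hij : i < j) (n : ℕ) :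
    ∃ k, A j n ⊆ core (𝒮 i k) := by
  obtain ⟨k, hk⟩ := h.exists_cell_superset hij n
  exact ⟨k, h.cell_succ i k ▸ hk⟩

theorem inter_eq_empty_or_subset (h : IsGenerationSeq μ 𝒦 θ G A 𝒮 Λ)
    (htile : ∀ j, ∀ S ∈ 𝒦 j, IsTileFamily μ S) (hij : i < j) {n k : ℕ} {Q R : Set X}
    (hQ : Q ∈ 𝒮 i n) (hR : R ∈ 𝒮 j k) : Q ∩ R = ∅ ∨ R ⊆ Q := by
  obtain ⟨l, hl⟩ := (h.isGeneration j).refines k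
  obtain ⟨n', hn'⟩ := h.exists_cell_subset_core hij l
  have hRcore : R ⊆ core (𝒮 i n') := (Set.subset_sUnion_of_mem hR).trans (hl.trans hn')
  rcases eq_or_ne n n' with rfl | hne
  · exact inter_eq_empty_or_subset_of_subset_core hQ
      ((htile i _ ((h.isGeneration i).mem n)).isOpen Q hQ)
      ((htile j _ ((h.isGeneration j).mem k)).isPreconnected R hR) hRcore
  · exact Or.inl (((h.isGeneration i).isOpenPartition.pairwise_disjoint hne).mono
      (Set.subset_sUnion_of_mem hQ) (hRcore.trans (core_subset _))).inter_eq

lemma cell_subset_or_disjoint_selectedUnion (h : IsGenerationSeq μ 𝒦 θ G A 𝒮 Λ)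
    (hij : i < j) (n : ℕ) :
    A j n ⊆ selectedUnion (𝒮 i) (Λ i) ∨ Disjoint (A j n) (selectedUnion (𝒮 i) (Λ i)) := by
  obtain ⟨k, hk⟩ := h.exists_cell_subset_core hij n
  have hk : A j n ⊆ ⋃₀ 𝒮 i k := hk.trans (core_subset _)
  by_cases hkΛ : k ∈ Λ i
  · exact Or.inl (hk.trans (Set.subset_biUnion_of_mem (u := fun k => ⋃₀ 𝒮 i k) hkΛ))
  · refine Or.inr (Set.disjoint_iUnion₂_right.2 fun l hl => ?_)
    exact ((h.isGeneration i).isOpenPartition.pairwise_disjoint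
      (ne_of_mem_of_not_mem hl hkΛ).symm).mono_left hk

theorem measure_inter_biInter [OpensMeasurableSpace X] (h : IsGenerationSeq μ 𝒦 θ G A 𝒮 Λ)
    (J : Finset ℕ) :
    μ (G ∩ ⋂ j ∈ J, selectedUnion (𝒮 j) (Λ j)) = μ G * ∏ j ∈ J, θ j := by
  induction J using Finset.induction_on_max with
  | empty => simp
  | insert j J hJ ih =>
    have hcells : ∀ n, A j n ⊆ G ∩ ⋂ i ∈ J, selectedUnion (𝒮 i) (Λ i) ∨
        Disjoint (A j n) (G ∩ ⋂ i ∈ J, selectedUnion (𝒮 i) (Λ i)) := by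
      intro n
      by_cases hall : ∀ i ∈ J, A j n ⊆ selectedUnion (𝒮 i) (Λ i)
      · exact Or.inl (Set.subset_inter ((h.isOpenPartition j).subset n) (Set.subset_iInter₂ hall))
      · push Not at hall
        obtain ⟨i, hi, hsub⟩ := hall
        exact Or.inr (((h.cell_subset_or_disjoint_selectedUnion (hJ i hi) n).resolve_left
          hsub).mono_right (Set.inter_subset_right.trans (Set.biInter_subset_of_mem hi)))
    rw [Finset.set_biInter_insert, Set.inter_comm (selectedUnion _ _), ← Set.inter_assoc,
      (h.isOpenPartition j).measure_inter_eq_mul Set.inter_subset_left hcells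
        (h.isGeneration j).measure_inter, ih, Finset.prod_insert fun hj => (hJ j hj).false]
    ring

end IsGenerationSeq

end Generation

section InfinitePi

variable {ι : Type*} {Y : ι → Type*} {A B : ∀ i, Set (Y i)}

lemma isOpen_univ_pi_of_cofinite [∀ i, TopologicalSpace (Y i)] (hA : ∀ i, IsOpen (A i))
    (hcof : ∀ᶠ i in cofinite, A i = Set.univ) : IsOpen (Set.univ.pi A) := by
  have hpi : Set.univ.pi A = {i | A i ≠ Set.univ}.pi A := by
    refine (Set.pi_mono' (fun _ _ => subset_rfl) (Set.subset_univ _)).antisymm fun x hx i _ => ?_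
    by_cases hi : A i = Set.univ
    · exact hi ▸ Set.mem_univ _
    · exact hx i hi
  exact hpi ▸ isOpen_set_pi hcof fun i _ => hA i

lemma infinitePi_pi_sdiff_pi [Countable ι] [∀ i, MeasurableSpace (Y i)] (μ : ∀ i, Measure (Y i))
    [∀ i, IsProbabilityMeasure (μ i)] (h : ∀ i, μ i (A i \ B i) = 0) :
    Measure.infinitePi μ (Set.univ.pi A \ Set.univ.pi B) = 0 := by
  refine measure_mono_null (t := ⋃ i, Function.eval i ⁻¹' (A i \ B i)) ?_
    (measure_iUnion_null fun i =>
      (measurePreserving_eval_infinitePi μ i).quasiMeasurePreserving.preimage_null (h i))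
  rintro x ⟨hxA, hxB⟩
  simp only [Set.mem_univ_pi, not_forall] at hxA hxB
  obtain ⟨i, hi⟩ := hxB
  exact Set.mem_iUnion.2 ⟨i, hxA i, hi⟩

end InfinitePi

section Circle

instance : IsProbabilityMeasure (volume : Measure 𝕋) :=
  ⟨by rw [AddCircle.measure_univ, ENNReal.ofReal_one]⟩

lemma volume_sphere (x : 𝕋) (r : ℝ) : volume (sphere x r) = 0 := by
  rw [← closedBall_sdiff_ball]
  exact ae_le_set.1 AddCircle.closedBall_ae_eq_ball.le

instance : NullSingletonClass (volume : Measure 𝕋) :=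
  ⟨fun x => by rw [← sphere_zero, volume_sphere]⟩

lemma image_coe_Ioo_eq_ball (x r : ℝ) :
    ((↑) : ℝ → 𝕋) '' Set.Ioo (x - r) (x + r) = ball (x : 𝕋) r := by
  ext z
  rw [mem_ball, dist_eq_norm, QuotientAddGroup.norm_lt_iff]
  constructor
  · rintro ⟨y, hy, rfl⟩
    exact ⟨y - x, rfl, by rw [Real.norm_eq_abs, abs_lt]; constructor <;> linarith [hy.1, hy.2]⟩
  · rintro ⟨y, hy, hyr⟩
    rw [Real.norm_eq_abs, abs_lt] at hyr
    refine ⟨x + y, ⟨by linarith, by linarith⟩, ?_⟩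
    rw [AddCircle.coe_add, hy, add_sub_cancel]

/-- The dyadic arc `(a / 2 ^ e, (a + 1) / 2 ^ e)`; for `e = 0` it is the full circle, matching the
convention that the exponent `0` marks a free coordinate. -/
def dyadicArc (e : ℕ) (a : ℝ) : Set 𝕋 :=
  if e = 0 then Set.univ else ((↑) : ℝ → 𝕋) '' Set.Ioo (a / 2 ^ e) ((a + 1) / 2 ^ e)

@[simp]
lemma dyadicArc_zero (a : ℝ) : dyadicArc 0 a = Set.univ := if_pos rfl

variable {e : ℕ}

lemma dyadicArc_of_ne_zero (he : e ≠ 0) (a : ℝ) :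
    dyadicArc e a = ((↑) : ℝ → 𝕋) '' Set.Ioo (a / 2 ^ e) ((a + 1) / 2 ^ e) := if_neg he

lemma dyadicArc_eq_ball (he : e ≠ 0) (a : ℝ) :
    dyadicArc e a = ball (((a + 1 / 2) / 2 ^ e : ℝ) : 𝕋) (2⁻¹ ^ e / 2) := by
  rw [dyadicArc_of_ne_zero he, ← image_coe_Ioo_eq_ball, inv_pow]
  congr 2 <;> ring

lemma isOpen_dyadicArc (e : ℕ) (a : ℝ) : IsOpen (dyadicArc e a) := by
  rcases eq_or_ne e 0 with rfl | he
  · simp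
  · exact dyadicArc_eq_ball he a ▸ isOpen_ball

lemma isPreconnected_dyadicArc (e : ℕ) (a : ℝ) : IsPreconnected (dyadicArc e a) := by
  rcases eq_or_ne e 0 with rfl | he
  · simpa using isPreconnected_univ
  · rw [dyadicArc_of_ne_zero he]
    exact isPreconnected_Ioo.image _ (AddCircle.continuous_mk' 1).continuousOn

lemma volume_dyadicArc (e : ℕ) (a : ℝ) : volume (dyadicArc e a) = 2⁻¹ ^ e := by
  rcases eq_or_ne e 0 with rfl | he
  · simp
  · have hle : (2⁻¹ : ℝ) ^ e ≤ 1 := pow_le_one₀ (by norm_num) (by norm_num)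
    rw [dyadicArc_eq_ball he, ← measure_congr AddCircle.closedBall_ae_eq_ball,
      AddCircle.volume_closedBall, mul_div_cancel₀ _ two_ne_zero, min_eq_right hle,
      ENNReal.ofReal_pow (by norm_num), ENNReal.ofReal_inv_of_pos two_pos, ENNReal.ofReal_ofNat]

lemma volume_frontier_dyadicArc (e : ℕ) (a : ℝ) : volume (frontier (dyadicArc e a)) = 0 := by
  rcases eq_or_ne e 0 with rfl | he
  · simp
  · rw [dyadicArc_eq_ball he]
    exact measure_mono_null frontier_ball_subset_sphere (volume_sphere _ _)

lemma dyadicArc_succ_subset {a b : ℝ} (hab : 2 * a ≤ b) (hba : b ≤ 2 * a + 1) :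
    dyadicArc (e + 1) b ⊆ dyadicArc e a := by
  rcases eq_or_ne e 0 with rfl | he
  · simp
  · rw [dyadicArc_of_ne_zero he, dyadicArc_of_ne_zero e.succ_ne_zero]
    refine Set.image_mono (Set.Ioo_subset_Ioo ?_ ?_) <;>
    · rw [pow_succ, div_le_div_iff₀ (by positivity) (by positivity)]
      nlinarith [pow_pos (two_pos (α := ℝ)) e]

lemma dyadicArc_subset_ball {a : ℝ} {x : 𝕋} (hx : x ∈ dyadicArc e a) :
    dyadicArc e a ⊆ ball x (2⁻¹ ^ e) := by
  intro y hy
  rw [mem_ball]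
  rcases eq_or_ne e 0 with rfl | he
  · have := AddCircle.norm_le_half_period (p := 1) one_ne_zero (x := y - x)
    rw [dist_eq_norm]
    norm_num at this ⊢
    linarith
  · rw [dyadicArc_eq_ball he, mem_ball] at hx hy
    linarith [dist_triangle_right y x (((a + 1 / 2) / 2 ^ e : ℝ) : 𝕋)]

lemma mem_Ioo_div_two_pow {a y : ℝ} :
    y ∈ Set.Ioo (a / 2 ^ e) ((a + 1) / 2 ^ e) ↔ y * 2 ^ e ∈ Set.Ioo a (a + 1) := by
  simp only [Set.mem_Ioo, div_lt_iff₀ (pow_pos (two_pos (α := ℝ)) e),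
    lt_div_iff₀ (pow_pos (two_pos (α := ℝ)) e)]

lemma disjoint_dyadicArc {a b : ℕ} (ha : a < 2 ^ e) (hb : b < 2 ^ e) (hab : a ≠ b) :
    Disjoint (dyadicArc e a) (dyadicArc e b) := by
  have he : e ≠ 0 := by
    rintro rfl
    omega
  have hIco : ∀ {c : ℕ} {w : ℝ}, c < 2 ^ e → w * 2 ^ e ∈ Set.Ioo (c : ℝ) (c + 1) →
      w ∈ Set.Ico (0 : ℝ) (0 + 1) := by
    intro c w hc hw
    have hpow : (0 : ℝ) < 2 ^ e := by positivity
    have hc' : (c : ℝ) + 1 ≤ 2 ^ e := by exact_mod_cast hc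
    rw [zero_add]
    exact ⟨(pos_of_mul_pos_left (c.cast_nonneg.trans_lt hw.1) hpow.le).le,
      (mul_lt_iff_lt_one_left hpow).1 (hw.2.trans_le hc')⟩
  rw [dyadicArc_of_ne_zero he, dyadicArc_of_ne_zero he, Set.disjoint_left]
  rintro _ ⟨y, hy, rfl⟩ ⟨z, hz, hzy⟩
  rw [mem_Ioo_div_two_pow] at hy hz
  obtain rfl := (AddCircle.coe_eq_coe_iff_of_mem_Ico (hIco hb hz) (hIco ha hy)).1 hzy
  have hlt : (a : ℝ) < b + 1 := hy.1.trans hz.2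
  have hgt : (b : ℝ) < a + 1 := hz.1.trans hy.2
  norm_cast at hlt hgt
  omega

lemma ae_forall_exists_mem_dyadicArc :
    ∀ᵐ x : 𝕋, ∀ e, ∃ a < 2 ^ e, x ∈ dyadicArc e (a : ℕ) := by
  have hrat : (Set.range fun q : ℚ => ((q : ℝ) : 𝕋)).Countable := Set.countable_range _
  filter_upwards [hrat.ae_notMem volume] with x hx e
  obtain ⟨y, hy, rfl⟩ : x ∈ ((↑) : ℝ → 𝕋) '' Set.Ico 0 (0 + 1) := by
    rw [AddCircle.coe_image_Ico_eq]
    trivial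
  rw [zero_add] at hy
  have hpow : (0 : ℝ) < 2 ^ e := by positivity
  have hnonneg : 0 ≤ y * 2 ^ e := mul_nonneg hy.1 hpow.le
  refine ⟨⌊y * 2 ^ e⌋₊, ?_, ?_⟩
  · rw [Nat.floor_lt hnonneg]
    push_cast
    exact mul_lt_of_lt_one_left hpow hy.2
  rcases eq_or_ne e 0 with rfl | he
  · simp
  · rw [dyadicArc_of_ne_zero he]
    refine ⟨y, mem_Ioo_div_two_pow.2 ⟨(Nat.floor_le hnonneg).lt_of_ne fun heq => hx ?_,
      Nat.lt_floor_add_one _⟩, rfl⟩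
    refine ⟨(⌊y * 2 ^ e⌋₊ / 2 ^ e : ℚ), ?_⟩
    push_cast
    rw [heq, mul_div_cancel_right₀ _ hpow.ne']

lemma volume_sdiff_interior_of_isArc {I : Set 𝕋} (hI : IsArc I) : volume (I \ interior I) = 0 := by
  obtain ⟨J, hJ, rfl⟩ := hI
  have hleast : {y | IsLeast J y}.Subsingleton := fun x hx y hy => hx.unique hy
  have hgreatest : {y | IsGreatest J y}.Subsingleton := fun x hx y hy => hx.unique hy
  refine Set.Countable.measure_zero
    (((hleast.countable.union hgreatest.countable).image ((↑) : ℝ → 𝕋)).mono ?_) _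
  rintro _ ⟨⟨y, hy, rfl⟩, hyint⟩
  refine ⟨y, ?_, rfl⟩
  by_contra hcon
  simp only [Set.mem_union, Set.mem_ofPred_eq, IsLeast, IsGreatest, hy, true_and, not_or,
    mem_lowerBounds, mem_upperBounds, not_forall, not_le] at hcon
  obtain ⟨⟨a, ha, hay⟩, b, hb, hyb⟩ := hcon
  have hopen : IsOpen (((↑) : ℝ → 𝕋) '' Set.Ioo a b) := QuotientAddGroup.isOpenMap_coe _ isOpen_Ioo
  exact hyint (interior_maximal
    (Set.image_mono (Set.Ioo_subset_Icc_self.trans (hJ.out ha hb))) hopen ⟨y, ⟨hay, hyb⟩, rfl⟩)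

end Circle

section TorusMeasure

lemma μT_eq_infinitePi : μT = Measure.infinitePi fun _ : ℕ => (volume : Measure 𝕋) := by
  set ν := Measure.infinitePi fun _ : ℕ => (volume : Measure 𝕋)
  have : ν.IsAddLeftInvariant := by
    refine ⟨fun g => ?_⟩
    have h := Measure.infinitePi_map_pi (fun _ : ℕ => (volume : Measure 𝕋))
      (f := fun i x => g i + x) (fun i => measurable_const_add (g i))
    simp only [map_add_left_eq_self] at h
    exact h
  have huniv : ν ((⊤ : TopologicalSpace.PositiveCompacts Torus) : Set Torus) = 1 := by simp
  rw [Measure.addHaarMeasure_unique ν ⊤, huniv, one_smul, μT]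

instance : IsProbabilityMeasure μT := by
  rw [μT_eq_infinitePi]
  infer_instance

lemma quasiMeasurePreserving_eval (i : ℕ) :
    Measure.QuasiMeasurePreserving (Function.eval i) μT (volume : Measure 𝕋) := by
  rw [μT_eq_infinitePi]
  exact (measurePreserving_eval_infinitePi _ i).quasiMeasurePreserving

theorem isOpenDivisible_μT : IsOpenDivisible μT := by
  refine isOpenDivisible_of_continuous (f := fun x : Torus => ‖x 0‖ₑ) (by fun_prop) fun y => ?_
  refine measure_mono_null (fun x hx => ?_)
    ((quasiMeasurePreserving_eval 0).preimage_null (volume_sphere 0 y.toReal))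
  rw [Set.mem_preimage, Function.eval, mem_sphere_zero_iff_norm, ← toReal_enorm]
  exact congrArg ENNReal.toReal hx

lemma μT_sdiff_interior_of_isRectangle {U : Set Torus} (hU : IsRectangle U) :
    μT (U \ interior U) = 0 := by
  obtain ⟨I, hI, hcof, rfl⟩ := hU
  have hopen : IsOpen (Set.univ.pi fun i => interior (I i)) :=
    isOpen_univ_pi_of_cofinite (fun _ => isOpen_interior)
      (hcof.mono fun i hi => by rw [hi, interior_univ])
  have hsub : (Set.univ.pi fun i => interior (I i)) ⊆ interior (Set.univ.pi I) :=
    interior_maximal (Set.pi_mono fun _ _ => interior_subset) hopen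
  rw [μT_eq_infinitePi]
  exact measure_mono_null (Set.sdiff_subset_sdiff_right hsub)
    (infinitePi_pi_sdiff_pi _ fun i => volume_sdiff_interior_of_isArc (hI i))

end TorusMeasure

section Cells

variable {e t : ℕ → ℕ} {c : ℕ → ℝ}

lemma shiftedCell_eq_pi (e t : ℕ → ℕ) (c : ℕ → ℝ) :
    shiftedCell e t c = Set.univ.pi fun i => dyadicArc (e i) (t i + c i) := by
  simp only [shiftedCell, dyadicArc, add_right_comm]

lemma dyadicCell_eq_pi (e t : ℕ → ℕ) :
    dyadicCell e t = Set.univ.pi fun i => dyadicArc (e i) (t i) := by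
  simp only [dyadicCell, shiftedCell_eq_pi, add_zero]

lemma isOpen_shiftedCell (he : e.support.Finite) (t : ℕ → ℕ) (c : ℕ → ℝ) :
    IsOpen (shiftedCell e t c) := by
  rw [shiftedCell_eq_pi]
  refine isOpen_univ_pi_of_cofinite (fun i => isOpen_dyadicArc _ _)
    (he.subset fun i hi hei => hi ?_)
  simp [hei]

lemma isPreconnected_shiftedCell (e t : ℕ → ℕ) (c : ℕ → ℝ) :
    IsPreconnected (shiftedCell e t c) := by
  rw [shiftedCell_eq_pi]
  exact isPreconnected_univ_pi fun i => isPreconnected_dyadicArc _ _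

lemma μT_frontier_shiftedCell (he : e.support.Finite) (t : ℕ → ℕ) (c : ℕ → ℝ) :
    μT (frontier (shiftedCell e t c)) = 0 := by
  rw [(isOpen_shiftedCell he t c).frontier_eq, shiftedCell_eq_pi, closure_pi_set,
    μT_eq_infinitePi]
  refine infinitePi_pi_sdiff_pi _ fun i => ?_
  rw [← (isOpen_dyadicArc _ _).frontier_eq, volume_frontier_dyadicArc]

lemma μT_shiftedCell {s : Finset ℕ} (hs : ∀ i ∉ s, e i = 0) (t : ℕ → ℕ) (c : ℕ → ℝ) :
    μT (shiftedCell e t c) = 2⁻¹ ^ ∑ i ∈ s, e i := by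
  rw [shiftedCell_eq_pi, μT_eq_infinitePi,
    Measure.infinitePi_pi_univ _ fun i => (isOpen_dyadicArc _ _).measurableSet]
  simp only [volume_dyadicArc]
  rw [tprod_eq_prod fun i hi => by rw [hs i hi, pow_zero], Finset.prod_pow_eq_pow_sum]

/-- The translation indices of the dyadic grid with exponents `e`. -/
def dyadicIndex (e : ℕ → ℕ) : Set (ℕ → ℕ) := {t | ∀ i, t i < 2 ^ e i}

lemma finite_dyadicIndex (he : e.support.Finite) : (dyadicIndex e).Finite := by
  have := he.to_subtype
  refine Set.Finite.of_injOn (f := fun t (i : e.support) => t i)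
    (t := Set.univ.pi fun i : e.support => Set.Iio (2 ^ e i)) (fun t ht i _ => ht i) ?_
    (Set.Finite.pi fun i => Set.finite_Iio _)
  intro t ht t' ht' htt'
  ext i
  by_cases hi : e i = 0
  · have hti := ht i
    have hti' := ht' i
    rw [hi] at hti hti'
    omega
  · exact congrFun htt' ⟨i, hi⟩

lemma pairwiseDisjoint_dyadicCell (e : ℕ → ℕ) :
    (dyadicIndex e).PairwiseDisjoint (dyadicCell e) := by
  intro t ht t' ht' hne
  obtain ⟨i, hi⟩ := Function.ne_iff.1 hne
  rw [Function.onFun, dyadicCell_eq_pi, dyadicCell_eq_pi]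
  exact Set.disjoint_univ_pi.2 ⟨i, disjoint_dyadicArc (ht i) (ht' i) hi⟩

/-- The indices of the cells of the dyadic grid with exponents `e` that lie in `G`. -/
def innerIndex (e : ℕ → ℕ) (G : Set Torus) : Set (ℕ → ℕ) :=
  {t ∈ dyadicIndex e | dyadicCell e t ⊆ G}

lemma isOpen_biUnion_innerIndex (he : e.support.Finite) (G : Set Torus) :
    IsOpen (⋃ t ∈ innerIndex e G, dyadicCell e t) :=
  isOpen_biUnion fun t _ => isOpen_shiftedCell he t _

lemma eventually_exists_dyadicCell_subset {e : ℕ → ℕ → ℕ}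
    (he : ∀ i, Tendsto (fun k => e k i) atTop atTop) {G : Set Torus} (hG : IsOpen G) {x : Torus}
    (hxG : x ∈ G) (hx : ∀ i n, ∃ a < 2 ^ n, x i ∈ dyadicArc n (a : ℕ)) :
    ∀ᶠ k in atTop, x ∈ ⋃ t ∈ innerIndex (e k) G, dyadicCell (e k) t := by
  obtain ⟨I, u, hu, hIu⟩ := isOpen_pi_iff.1 hG x hxG
  have hball : ∀ i ∈ I, ∀ᶠ k in atTop, ball (x i) (2⁻¹ ^ e k i) ⊆ u i := by
    intro i hi
    obtain ⟨r, hr, hru⟩ := Metric.isOpen_iff.1 (hu i hi).1 (x i) (hu i hi).2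
    have hlim : Tendsto (fun k => (2⁻¹ : ℝ) ^ e k i) atTop (𝓝 0) :=
      (_root_.tendsto_pow_atTop_nhds_zero_of_lt_one (by norm_num) (by norm_num)).comp (he i)
    filter_upwards [hlim.eventually_lt_const hr] with k hk
    exact (ball_subset_ball hk.le).trans hru
  filter_upwards [(Finset.eventually_all I).2 hball] with k hk
  choose t ht hxt using fun i => hx i (e k i)
  refine Set.mem_biUnion (x := t) ⟨ht, ?_⟩ ?_ <;> rw [dyadicCell_eq_pi]
  · exact fun y hy => hIu fun i hi => hk i hi (dyadicArc_subset_ball (hxt i) (hy i trivial))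
  · exact fun i _ => hxt i

theorem tendsto_μT_biUnion_innerIndex {e : ℕ → ℕ → ℕ} (hfin : ∀ k, (e k).support.Finite)
    (he : ∀ i, Tendsto (fun k => e k i) atTop atTop) {G : Set Torus} (hG : IsOpen G) :
    Tendsto (fun k => μT (⋃ t ∈ innerIndex (e k) G, dyadicCell (e k) t)) atTop (𝓝 (μT G)) := by
  have hdyadic : ∀ᵐ x ∂μT, ∀ i n, ∃ a < 2 ^ n, x i ∈ dyadicArc n (a : ℕ) := by
    have h := fun i => (quasiMeasurePreserving_eval i).ae ae_forall_exists_mem_dyadicArc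
    exact ae_all_iff.2 h
  refine tendsto_measure_of_ae_tendsto_indicator_of_isFiniteMeasure atTop hG.measurableSet
    (fun k => (isOpen_biUnion_innerIndex (hfin k) G).measurableSet) ?_
  filter_upwards [hdyadic] with x hx
  by_cases hxG : x ∈ G
  · filter_upwards [eventually_exists_dyadicCell_subset he hG hxG hx] with k hk
    exact iff_of_true hk hxG
  · refine Eventually.of_forall fun k => iff_of_false (fun hk => hxG ?_) hxG
    exact Set.iUnion₂_subset (fun t ht => ht.2) hk

end Cells

section Configurations

/-- The `(ε, d)`-configurations around members of `R0`. -/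
def configs (ε : ℝ) (d : ℕ) : Set (Set (Set Torus)) := {S | ∃ Q, IsConfig ε d Q S}

variable {ε : ℝ} {d k : ℕ} {s : ℕ → ℕ}

lemma finite_support_expo (m : ℕ) : (expo m).support.Finite := by
  refine (Set.finite_lt_nat (kOf m + 2)).subset fun i hi => ?_
  by_contra hle
  refine hi ?_
  simp only [Set.mem_ofPred_eq, not_lt] at hle
  simp only [expo]
  split_ifs <;> omega

lemma isTileFamily_of_mem_configs {S : Set (Set Torus)} (hS : S ∈ configs ε d) :
    IsTileFamily μT S := by
  obtain ⟨Q, m, t, -, -, rfl, -, -, rfl⟩ := hS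
  have hcell : ∀ Q ∈ insert (dyadicCell (expo m) t)
      {Q | ∃ i < d, Q = shiftedCell (expo m) t fun j => if j = i then 1 - ε else 0},
      ∃ c, Q = shiftedCell (expo m) t c := by
    rintro _ (rfl | ⟨i, -, rfl⟩)
    exacts [⟨_, rfl⟩, ⟨_, rfl⟩]
  refine ⟨.insert _ (((Set.finite_lt_nat d).image fun i =>
      shiftedCell (expo m) t fun j => if j = i then 1 - ε else 0).subset ?_), ?_, ?_, ?_⟩
  · rintro _ ⟨i, hi, rfl⟩
    exact ⟨i, hi, rfl⟩
  all_goals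
    intro Q hQ
    obtain ⟨c, rfl⟩ := hcell Q hQ
  · exact isOpen_shiftedCell (finite_support_expo m) t c
  · exact isPreconnected_shiftedCell _ t c
  · exact μT_frontier_shiftedCell (finite_support_expo m) t c

lemma kOf_sq_add (l : ℕ) : kOf ((l + 1) ^ 2 + (l + 1)) = l := by
  rw [kOf, Nat.find_eq_iff]
  refine ⟨le_rfl, fun n hn => ?_⟩
  have : n + 1 ≤ l := hn
  nlinarith

lemma expo_sq_add (hk : 0 < k) (i : ℕ) : expo (k ^ 2 + k) i = if i ≤ k then k else 0 := by
  obtain ⟨l, rfl⟩ := Nat.exists_eq_add_one.2 hk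
  have hr : (l + 1) ^ 2 + (l + 1) - (l ^ 2 + l) = 2 * l + 2 := by
    rw [show (l + 1) ^ 2 + (l + 1) = 2 * l + 2 + (l ^ 2 + l) by ring, Nat.add_sub_cancel]
  simp only [expo, kOf_sq_add, hr]
  split_ifs <;> omega

/-- The exponents of the blocks obtained from the cubes at level `k ^ 2 + k` by doubling the sides
in the first `d` coordinates. A configuration around the lower corner cube of a block stays inside
the block, whence the packings of open sets by configurations. -/
def blockExpo (d k i : ℕ) : ℕ := if i < d then k - 1 else if i ≤ k then k else 0

/-- The translation indices of the lower corner cube of the block with indices `s`. -/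
def corner (d : ℕ) (s : ℕ → ℕ) (i : ℕ) : ℕ := if i < d then 2 * s i else s i

/-- The configuration around the lower corner cube of the block with indices `s`. -/
def blockConfig (ε : ℝ) (d k : ℕ) (s : ℕ → ℕ) : Set (Set Torus) :=
  insert (dyadicCell (expo (k ^ 2 + k)) (corner d s))
    {Q | ∃ i < d, Q = shiftedCell (expo (k ^ 2 + k)) (corner d s)
      fun j => if j = i then 1 - ε else 0}

lemma expo_eq_blockExpo_add (hd : 0 < d) (hdk : d ≤ k) (i : ℕ) :
    expo (k ^ 2 + k) i = blockExpo d k i + if i < d then 1 else 0 := by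
  rw [expo_sq_add (hd.trans_le hdk), blockExpo]
  split_ifs <;> omega

lemma blockExpo_eq_zero (hdk : d ≤ k) : ∀ i ∉ Finset.range (k + 1), blockExpo d k i = 0 := by
  intro i hi
  rw [Finset.mem_range] at hi
  rw [blockExpo, if_neg (by omega), if_neg (by omega)]

lemma finite_support_blockExpo (hdk : d ≤ k) : (blockExpo d k).support.Finite :=
  (Finset.range (k + 1)).finite_toSet.subset fun i hi =>
    not_imp_comm.1 (blockExpo_eq_zero hdk i) hi

lemma tendsto_blockExpo (d i : ℕ) : Tendsto (fun k => blockExpo d (d + k) i) atTop atTop := by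
  refine tendsto_atTop.2 fun b => ?_
  filter_upwards [eventually_ge_atTop (b + i + 1)] with k hk
  rw [blockExpo]
  split_ifs <;> omega

lemma sum_expo_sq_add (hk : 0 < k) :
    ∑ i ∈ Finset.range (k + 1), expo (k ^ 2 + k) i = (k + 1) * k := by
  rw [Finset.sum_congr rfl fun i hi => (expo_sq_add hk i).trans
    (if_pos (Nat.lt_succ_iff.1 (Finset.mem_range.1 hi)))]
  simp

lemma sum_blockExpo_add (hd : 0 < d) (hdk : d ≤ k) :
    ∑ i ∈ Finset.range (k + 1), blockExpo d k i + d = (k + 1) * k := by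
  have hcard : {i ∈ Finset.range (k + 1) | i < d} = Finset.range d := by
    grind
  simp only [← sum_expo_sq_add (hd.trans_le hdk), expo_eq_blockExpo_add hd hdk,
    Finset.sum_add_distrib, Finset.sum_boole, hcard, Finset.card_range, Nat.cast_id]

lemma μT_shiftedCell_sq_add (hk : 0 < k) (t : ℕ → ℕ) (c : ℕ → ℝ) :
    μT (shiftedCell (expo (k ^ 2 + k)) t c) = 2⁻¹ ^ ((k + 1) * k) := by
  rw [μT_shiftedCell (s := Finset.range (k + 1)), sum_expo_sq_add hk]
  intro i hi
  rw [Finset.mem_range] at hi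
  rw [expo_sq_add hk, if_neg (by omega)]

lemma isConfig_blockConfig (hd : 0 < d) (hdk : d ≤ k) (hs : s ∈ dyadicIndex (blockExpo d k)) :
    IsConfig ε d (dyadicCell (expo (k ^ 2 + k)) (corner d s)) (blockConfig ε d k s) := by
  have hk := hd.trans_le hdk
  refine ⟨k ^ 2 + k, corner d s, by positivity, fun i => ?_, rfl, ?_, fun i hi => ?_, rfl⟩
  · have := hs i
    rw [expo_eq_blockExpo_add hd hdk, corner]
    split_ifs
    · rw [pow_succ]
      omega
    · simpa
  · rw [dyadicCell, μT_shiftedCell_sq_add hk]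
    refine pow_le_pow_right_of_le_one' (by simp) ?_
    obtain ⟨l, rfl⟩ := Nat.exists_eq_add_one.2 hd
    simp only [Nat.add_sub_cancel]
    nlinarith
  · rw [expo_sq_add hk, if_pos (by omega)]
    exact hk.ne'

lemma shiftedCell_corner_subset (hd : 0 < d) (hdk : d ≤ k) {c : ℕ → ℝ}
    (hc : ∀ i, c i ∈ Set.Icc 0 1) (hc0 : ∀ i, d ≤ i → c i = 0) :
    shiftedCell (expo (k ^ 2 + k)) (corner d s) c ⊆ dyadicCell (blockExpo d k) s := by
  rw [shiftedCell_eq_pi, dyadicCell_eq_pi]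
  refine Set.pi_mono fun i _ => ?_
  rw [expo_eq_blockExpo_add hd hdk, corner]
  split_ifs with hi
  · refine dyadicArc_succ_subset ?_ ?_ <;> push_cast <;> linarith [(hc i).1, (hc i).2]
  · rw [hc0 i (not_lt.1 hi), add_zero, add_zero]

lemma sUnion_blockConfig_subset (hd : 0 < d) (hdk : d ≤ k) (hε : ε ∈ Set.Icc 0 1) :
    ⋃₀ blockConfig ε d k s ⊆ dyadicCell (blockExpo d k) s := by
  refine Set.sUnion_subset ?_
  rintro _ (rfl | ⟨i, hi, rfl⟩)
  · exact shiftedCell_corner_subset hd hdk (fun _ => by simp) fun _ _ => rfl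
  · refine shiftedCell_corner_subset hd hdk (fun j => ?_) fun j hj => if_neg (by omega)
    split_ifs
    · exact ⟨sub_nonneg.2 hε.2, sub_le_self _ hε.1⟩
    · simp

lemma mul_μT_block_le (hd : 0 < d) (hdk : d ≤ k) :
    2⁻¹ ^ d * μT (dyadicCell (blockExpo d k) s) ≤ μT (⋃₀ blockConfig ε d k s) := by
  refine le_trans (le_of_eq ?_) (measure_mono (Set.subset_sUnion_of_mem (Set.mem_insert _ _)))
  rw [dyadicCell, dyadicCell, μT_shiftedCell_sq_add (hd.trans_le hdk),
    μT_shiftedCell (blockExpo_eq_zero hdk), ← pow_add, add_comm,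
    sum_blockExpo_add hd hdk]

lemma mul_measure_biUnion_le {ι X : Type*} [MeasurableSpace X] {μ : Measure X} {T : Set ι}
    (hT : T.Countable) {A B : ι → Set X} (hdisj : T.PairwiseDisjoint A)
    (hA : ∀ t ∈ T, MeasurableSet (A t)) {c : ℝ≥0∞} (h : ∀ t ∈ T, c * μ (B t) ≤ μ (A t)) :
    c * μ (⋃ t ∈ T, B t) ≤ μ (⋃ t ∈ T, A t) :=
  calc c * μ (⋃ t ∈ T, B t) ≤ c * ∑' t : T, μ (B t) := by
        gcongr
        exact measure_biUnion_le μ hT B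
    _ = ∑' t : T, c * μ (B t) := ENNReal.tsum_mul_left.symm
    _ ≤ ∑' t : T, μ (A t) := ENNReal.tsum_le_tsum fun t => h t t.2
    _ = μ (⋃ t ∈ T, A t) := (measure_biUnion hT hdisj hA).symm

lemma exists_packing_configs (hd : 0 < d) (hdk : d ≤ k) (hε : ε ∈ Set.Icc 0 1) (G : Set Torus) :
    ∃ 𝒟, IsPacking (Set.sUnion '' configs ε d) G 𝒟 ∧ 𝒟.Finite ∧
      2⁻¹ ^ d * μT (⋃ s ∈ innerIndex (blockExpo d k) G, dyadicCell (blockExpo d k) s) ≤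
        μT (⋃₀ 𝒟) := by
  set T := innerIndex (blockExpo d k) G
  have hfin : T.Finite :=
    (finite_dyadicIndex (finite_support_blockExpo hdk)).subset fun s hs => hs.1
  have hmem : ∀ s ∈ T, blockConfig ε d k s ∈ configs ε d := fun s hs =>
    ⟨_, isConfig_blockConfig hd hdk hs.1⟩
  have hsub : ∀ s, ⋃₀ blockConfig ε d k s ⊆ dyadicCell (blockExpo d k) s := fun s =>
    sUnion_blockConfig_subset hd hdk hε
  have hdisj : T.PairwiseDisjoint fun s => ⋃₀ blockConfig ε d k s :=
    ((pairwiseDisjoint_dyadicCell _).subset fun s hs => hs.1).mono hsub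
  refine ⟨(fun s => ⋃₀ blockConfig ε d k s) '' T, ⟨?_, ?_, ?_⟩, hfin.image _, ?_⟩
  · rintro _ ⟨s, hs, rfl⟩
    exact ⟨_, hmem s hs, rfl⟩
  · rintro x ⟨_, ⟨s, hs, rfl⟩, hx⟩
    exact hs.2 (hsub s hx)
  · rintro _ ⟨s, hs, rfl⟩ _ ⟨s', hs', rfl⟩ hne
    exact hdisj hs hs' fun h => hne (h ▸ rfl)
  · rw [Set.sUnion_image]
    exact mul_measure_biUnion_le hfin.countable hdisj (fun s hs =>
      (isOpen_sUnion (isTileFamily_of_mem_configs (hmem s hs)).isOpen).measurableSet)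
      fun s _ => mul_μT_block_le hd hdk

theorem isVitaliClass_configs (hd : 0 < d) (hε : ε ∈ Set.Icc 0 1) :
    IsVitaliClass μT (Set.sUnion '' configs ε d) where
  isOpen := by
    rintro _ ⟨S, hS, rfl⟩
    exact isOpen_sUnion (isTileFamily_of_mem_configs hS).isOpen
  measure_frontier := by
    rintro _ ⟨S, hS, rfl⟩
    exact (isTileFamily_of_mem_configs hS).measure_frontier_sUnion
  exists_packing := by
    refine ⟨2⁻¹ ^ d * 2⁻¹, mul_ne_zero (pow_ne_zero _ (by simp)) (by simp), fun G hG => ?_⟩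
    rcases eq_or_ne (μT G) 0 with hG0 | hG0
    · exact ⟨∅, .empty, Set.finite_empty, by simp [hG0]⟩
    have hlim := tendsto_μT_biUnion_innerIndex
      (fun k => finite_support_blockExpo (Nat.le_add_right d k)) (tendsto_blockExpo d) hG
    obtain ⟨k, hk⟩ := (hlim.eventually_const_lt
      (ENNReal.half_lt_self hG0 (measure_ne_top _ _))).exists
    obtain ⟨𝒟, h𝒟, hfin, hle⟩ := exists_packing_configs hd (Nat.le_add_right d k) hε G
    refine ⟨𝒟, h𝒟, hfin, le_trans ?_ hle⟩
    rw [mul_assoc, mul_comm 2⁻¹, ← div_eq_mul_inv]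
    gcongr

end Configurations

end RubioDeFrancia

open RubioDeFrancia in
theorem statement12_general {U : Set Torus} (hU : μT (U \ interior U) = 0) {d : ℕ → ℕ}
    (hd : ∀ j, 0 < d j) {ε : ℕ → ℝ} (hε : ∀ j, ε j ∈ Set.Icc 0 1) {θ : ℕ → ℝ≥0∞}
    (hθ : ∀ j, θ j ≤ 1) :
    ∃ (Q : ℕ → ℕ → Set Torus) (𝒮 : ℕ → ℕ → Set (Set Torus)),
      (∀ j n, IsConfig (ε j) (d j) (Q j n) (𝒮 j n)) ∧
      (∀ j, Pairwise fun n₁ n₂ => Disjoint (⋃₀ 𝒮 j n₁) (⋃₀ 𝒮 j n₂)) ∧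
      (∀ j, μT (U \ ⋃ n, ⋃₀ 𝒮 j n) = 0) ∧
      (∀ j₁ j₂, j₁ < j₂ → ∀ n₁ n₂, ∀ Q₁ ∈ 𝒮 j₁ n₁, ∀ Q₂ ∈ 𝒮 j₂ n₂,
        Q₁ ∩ Q₂ = ∅ ∨ Q₂ ⊆ Q₁) ∧
      ∃ Λ : ℕ → Set ℕ, ∀ J : Finset ℕ, J.Nonempty →
        μT (⋂ j ∈ J, ⋃ n ∈ Λ j, ⋃₀ 𝒮 j n) = μT U * ∏ j ∈ J, θ j := by
  obtain ⟨G, hG, hG0, hUG, hμG⟩ : ∃ G, IsOpen G ∧ μT G ≠ 0 ∧ μT (U \ G) = 0 ∧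
      (μT U = 0 ∨ μT G = μT U) := by
    by_cases hU0 : μT U = 0
    · exact ⟨Set.univ, isOpen_univ, by simp, by simp, Or.inl hU0⟩
    · have hint := measure_eq_measure_of_null_sdiff interior_subset hU
      exact ⟨interior U, isOpen_interior, hint ▸ hU0, hU, Or.inr hint⟩
  have htile : ∀ j, ∀ S ∈ configs (ε j) (d j), IsTileFamily μT S :=
    fun _ _ => isTileFamily_of_mem_configs
  obtain ⟨A, 𝒮, Λ, h⟩ := exists_isGenerationSeq isOpenDivisible_μT
    (fun j => isVitaliClass_configs (hd j) (hε j)) htile hθ hG hG0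
  have hpart := fun j => (h.isGeneration j).isOpenPartition
  choose Q hQ using fun j n => (h.isGeneration j).mem n
  refine ⟨Q, 𝒮, hQ, fun j => (hpart j).pairwise_disjoint,
    fun j => measure_mono_null (sdiff_triangle U G _)
      (measure_union_null hUG (hpart j).measure_sdiff_iUnion),
    fun i j hij n k Q₁ hQ₁ Q₂ hQ₂ => h.inter_eq_empty_or_subset htile hij hQ₁ hQ₂, ?_⟩
  rcases hμG with hU0 | hμG
  · exact ⟨fun _ => ∅, fun J ⟨j, hj⟩ => by
      rw [hU0, zero_mul]
      exact measure_mono_null (Set.biInter_subset_of_mem hj) (by simp)⟩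
  refine ⟨Λ, fun J ⟨j, hj⟩ => ?_⟩
  have hsub : ⋂ j ∈ J, selectedUnion (𝒮 j) (Λ j) ⊆ G :=
    (Set.biInter_subset_of_mem hj).trans (Set.iUnion₂_subset fun n _ => (hpart j).subset n)
  rw [← hμG, ← h.measure_inter_biInter J, Set.inter_eq_self_of_subset_right hsub]
  rfl

/-- **Theorem (statement 12, Proposition P3).** Fix a rectangle `U ⊆ 𝕋^ω`, sequences
`(d_j)` and `(m_j)` of positive integers, and a sequence `(ε_j)` with `ε_j ∈ (0,1/2]`.
Then there exists a family `𝒮 = ⋃_j ⋃_n 𝒮_{j,n}` such that: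
(A1) each `𝒮_{j,n}` is an `(ε_j, d_j)`-configuration around some `Q_{j,n} ∈ R₀`;
(A2) for every `j`, `U` is covered, up to a set of measure zero, by the pairwise disjoint
sets `E_{j,n} = ⋃_{Q ∈ 𝒮_{j,n}} Q`;
(A3) for all `j₁ < j₂` and `n₁, n₂`, if `Q₁ ∈ 𝒮_{j₁,n₁}` and `Q₂ ∈ 𝒮_{j₂,n₂}`, then
`Q₁ ∩ Q₂ = ∅` or `Q₂ ⊆ Q₁`;
(A4) there are subsets `Λ_j ⊆ ℕ` such that the sets `F_j* = ⋃_{n ∈ Λ_j} E_{j,n}` are mutually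
independent events of probability `2^{-m_j}` with respect to the uniform probability measure
on `U`. -/
theorem statement12 (U : Set Torus) (hU : IsRectangle U)
    (d m : ℕ → ℕ) (hd : ∀ j, 0 < d j) (hm : ∀ j, 0 < m j)
    (ε : ℕ → ℝ) (hε : ∀ j, 0 < ε j) (hε' : ∀ j, ε j ≤ 1 / 2) :
    ∃ (Q : ℕ → ℕ → Set Torus) (𝒮 : ℕ → ℕ → Set (Set Torus)),
      (∀ j n, IsConfig (ε j) (d j) (Q j n) (𝒮 j n)) ∧
      (∀ j, Pairwise fun n₁ n₂ => Disjoint (⋃₀ 𝒮 j n₁) (⋃₀ 𝒮 j n₂)) ∧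
      (∀ j, μT (U \ ⋃ n, ⋃₀ 𝒮 j n) = 0) ∧
      (∀ j₁ j₂, j₁ < j₂ → ∀ n₁ n₂, ∀ Q₁ ∈ 𝒮 j₁ n₁, ∀ Q₂ ∈ 𝒮 j₂ n₂,
        Q₁ ∩ Q₂ = ∅ ∨ Q₂ ⊆ Q₁) ∧
      ∃ Λ : ℕ → Set ℕ, ∀ J : Finset ℕ, J.Nonempty →
        μT (⋂ j ∈ J, ⋃ n ∈ Λ j, ⋃₀ 𝒮 j n) = μT U * ∏ j ∈ J, 2⁻¹ ^ m j :=
  statement12_general (RubioDeFrancia.μT_sdiff_interior_of_isRectangle hU) hd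
    (fun j => ⟨(hε j).le, (hε' j).trans (by norm_num)⟩) fun j => pow_le_one' (by simp) (m j)
end
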